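/- arXiv:2604.05304 — 2 statements merged into one kernel-verified Lean document; each statement's English description precedes it below -/
import Mathlib

section
/- There exists a constant N such that the following holds: let n be an M-number, let n_R be its non-tight part, let ℓ = ω(n_R), and let j = ⌊√ℓ⌋. If ℓ ≥ N and n is not divisible by q² for any non-tight prime q exceeding the j-th smallest odd prime, then n is matchable. -/
/-!
Write `n = n_T * R` with `R` the non-tight part, `P` the product of the tight primes and
`M = τ(R)`, so that `τ(n) = P * M`.

**Reduction to `R`.** By the Chinese remainder theorem, sending `d ∣ n` to the residue `r` modulo
`P` with `r ≡ v_p(d) (mod p)` for all tight `p` records all valuations of `d` at tight primes,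
because these lie in `[0, p - 1]`; and no tight `p ∣ d` divides an integer congruent to `r`. The
integers of `[1, P * M]` congruent to a given `r` are `r + P * i` with `i < M`, and for a prime
`q ∣ R` the condition `q ∣ r + P * i` forces `i` into one residue class `c q` modulo `q`. It is
therefore enough to find, for every choice of residues `c`, a bijection `f` from the divisors of `R`
onto `[0, M)` such that `f d` lies in `c q` for no prime `q ∣ d`
(`matchable_of_forall_residues`).

**Matching for `R`.** Let `ℓ = ω(R)`, `m = ⌊ℓ / 100⌋`, and split the primes of `R` into the set `s`
of those `≤ m` and the set `L` of those `> m`. For `ℓ` large, `L` consists of primes dividing `R`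
exactly once (`sqrt_lt_primeCounting`), and the sum of the reciprocals of its members is tiny
(`recip_sum_le`), both by Chebyshev's estimates. Suppose Hall's condition fails for a set `W` of
integers, and let `S` be the set of divisors with no admissible partner in `W`; then
`#S + #W > M`. Group `S` by the set `a ⊆ s` of small primes dividing the divisor and `W` by the
set `b ⊆ s` of small primes whose class contains the integer; let `σ a` and `β b` be the densities
of `S` and `W` inside these groups. Under the product measures with `q ∈ a` of probability
`e q / (e q + 1)` and `q ∈ b` of probability `1 / q`, the means of `σ` and `β` are `#S / M` and
`#W / M`. Since `e q + 2 ≤ q`, the two probabilities add up to less than one, so the two measures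
can be coupled to make `a` and `b` disjoint (`coupling_le`). For disjoint `a`, `b` one has
`σ a + β b ≤ 1 + η` with `η` exponentially small in `m`: if the least number of classes of `L` met
by an integer of the `b`-group of `W` is `k ≥ 1`, then `σ a ≤ 1 - 2 ^ (-k)`, while `β b` is far
smaller than `2 ^ (-k)` by a union bound over the `k`-subsets of `L`. Finally one pair `(∅, b₀)`
has a deficit which, weighted by its probability, exceeds `η`, so that `#S + #W ≤ M`, a
contradiction (`Config.hall`).
-/

/-- A positive integer `n` is matchable if there is a bijection `ψ` from the set of
divisors of `n` to `{1, 2, ..., τ(n)}` with `gcd(d, ψ(d)) = 1` for every divisor `d`. -/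
def Matchable (n : ℕ) : Prop :=
  ∃ ψ : ℕ → ℕ, Set.BijOn ψ ↑n.divisors ↑(Finset.Icc 1 n.divisors.card) ∧
    ∀ d ∈ n.divisors, Nat.gcd d (ψ d) = 1

/-- An M-number is a positive integer not divisible by `p^p` for any prime `p`. -/
def IsMNumber (n : ℕ) : Prop := ∀ p : ℕ, p.Prime → ¬ p ^ p ∣ n

/-- The tight part `n_T` of `n`: the product of `p^{p-1}` over the tight primes of `n`,
i.e. the primes `p ∣ n` with `v_p(n) = p - 1`. -/
def tightPart (n : ℕ) : ℕ :=
  ∏ p ∈ n.primeFactors.filter (fun p => n.factorization p = p - 1), p ^ (p - 1)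

/-- The non-tight part `n_R = n / n_T` of `n`. -/
def nonTightPart (n : ℕ) : ℕ := n / tightPart n

/-- The `j`-th smallest odd prime (`j ≥ 1`), so `oddPrime 1 = 3`, `oddPrime 2 = 5`, etc. -/
noncomputable def oddPrime (j : ℕ) : ℕ :=
  Nat.nth (fun p => p.Prime ∧ p ≠ 2) (j - 1)

namespace DivisorMatching

open Finset

/-! ### Coupling and elementary inequalities -/

/-- Random subsets `a`, `b` of `s`, containing `q` independently with probabilities `x q` and
`y q`, can be coupled to be disjoint as `x q + y q ≤ 1`: each `q` is put in `a`, in `b`, or in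
neither. A bound for `σ a + β b` on disjoint pairs thus bounds the sum of the expectations of `σ`
and `β`, and a better bound at the pair `(∅, b₀)` improves it in proportion to the probability of
that pair. -/
theorem coupling_le (s : Finset ℕ) (x y : ℕ → ℝ) (hx : ∀ q ∈ s, 0 ≤ x q) (hy : ∀ q ∈ s, 0 ≤ y q)
    (hxy : ∀ q ∈ s, x q + y q ≤ 1) (σ β : Finset ℕ → ℝ) (η g : ℝ)
    (h : ∀ a ⊆ s, ∀ b ⊆ s, Disjoint a b → σ a + β b ≤ 1 + η)
    (b₀ : Finset ℕ) (hb₀ : b₀ ⊆ s) (h₀ : σ ∅ + β b₀ ≤ 1 - g) :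
    ∑ a ∈ s.powerset, ((∏ q ∈ a, x q) * ∏ q ∈ s \ a, (1 - x q)) * σ a +
      ∑ b ∈ s.powerset, ((∏ q ∈ b, y q) * ∏ q ∈ s \ b, (1 - y q)) * β b ≤
    1 + η - ((∏ q ∈ b₀, y q) * ∏ q ∈ s \ b₀, (1 - x q - y q)) * (g + η) := by
  set μ : Finset ℕ → Finset ℕ → ℝ := fun a b =>
    (∏ q ∈ a, x q) * (∏ q ∈ b, y q) * ∏ q ∈ s \ (a ∪ b), (1 - x q - y q) with hμ
  have hmargA : ∀ a ∈ s.powerset, ∑ b ∈ (s \ a).powerset, μ a b =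
      (∏ q ∈ a, x q) * ∏ q ∈ s \ a, (1 - x q) := by
    intro a _
    have : ∀ q ∈ s \ a, 1 - x q = y q + (1 - x q - y q) := fun q _ => by ring
    rw [prod_congr rfl this, prod_add, mul_sum]
    refine sum_congr rfl fun b _ => ?_
    simp only [hμ]
    rw [mul_assoc, Finset.sdiff_sdiff_left']
    congr 3
    ext q; simp only [mem_sdiff, mem_union, mem_inter]; tauto
  have hmargB : ∀ b ∈ s.powerset, ∑ a ∈ (s \ b).powerset, μ a b =
      (∏ q ∈ b, y q) * ∏ q ∈ s \ b, (1 - y q) := by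
    intro b _
    have : ∀ q ∈ s \ b, 1 - y q = x q + (1 - x q - y q) := fun q _ => by ring
    rw [prod_congr rfl this, prod_add, mul_sum]
    refine sum_congr rfl fun a _ => ?_
    simp only [hμ]
    rw [mul_comm (∏ q ∈ a, x q), mul_assoc, Finset.sdiff_sdiff_left']
    congr 3
    ext q; simp only [mem_sdiff, mem_union, mem_inter]; tauto
  have hswap : ∀ f : Finset ℕ → Finset ℕ → ℝ,
      ∑ a ∈ s.powerset, ∑ b ∈ (s \ a).powerset, f a b =
      ∑ b ∈ s.powerset, ∑ a ∈ (s \ b).powerset, f a b := by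
    intro f
    refine sum_comm' fun a b => ?_
    simp only [mem_powerset, subset_sdiff]
    constructor
    · rintro ⟨h1, h2, h3⟩; exact ⟨⟨h1, h3.symm⟩, h2⟩
    · rintro ⟨⟨h1, h3⟩, h2⟩; exact ⟨h1, h2, h3.symm⟩
  have htotal : ∑ a ∈ s.powerset, ∑ b ∈ (s \ a).powerset, μ a b = 1 := by
    rw [sum_congr rfl hmargA, ← prod_add]
    simp
  have hμ0 : ∀ a ∈ s.powerset, ∀ b ∈ (s \ a).powerset, 0 ≤ μ a b := by
    intro a ha b hb
    rw [mem_powerset] at ha hb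
    have hb' := hb.trans sdiff_subset
    refine mul_nonneg (mul_nonneg ?_ ?_) ?_
    · exact prod_nonneg fun q hq => hx q (ha hq)
    · exact prod_nonneg fun q hq => hy q (hb' hq)
    · exact prod_nonneg fun q hq => by linarith [hxy q (sdiff_subset hq)]
  have hgap0 : ∀ a ∈ s.powerset, ∀ b ∈ (s \ a).powerset,
      0 ≤ μ a b * (1 + η - σ a - β b) := by
    intro a ha b hb
    refine mul_nonneg (hμ0 a ha b hb) ?_
    rw [mem_powerset, subset_sdiff] at hb
    linarith [h a (mem_powerset.1 ha) b hb.1 hb.2.symm]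
  have hsingle : μ ∅ b₀ * (1 + η - σ ∅ - β b₀) ≤
      ∑ a ∈ s.powerset, ∑ b ∈ (s \ a).powerset, μ a b * (1 + η - σ a - β b) := by
    have he : (∅ : Finset ℕ) ∈ s.powerset := by simp
    have hb : b₀ ∈ (s \ ∅).powerset := by simpa using hb₀
    exact (single_le_sum (f := fun b => μ ∅ b * (1 + η - σ ∅ - β b)) (hgap0 ∅ he) hb).trans
      (single_le_sum (f := fun a => ∑ b ∈ (s \ a).powerset, μ a b * (1 + η - σ a - β b))
        (fun a ha => sum_nonneg (hgap0 a ha)) he)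
  have hexpand : ∑ a ∈ s.powerset, ∑ b ∈ (s \ a).powerset, μ a b * (1 + η - σ a - β b) =
      (1 + η) - ∑ a ∈ s.powerset, ((∏ q ∈ a, x q) * ∏ q ∈ s \ a, (1 - x q)) * σ a -
      ∑ b ∈ s.powerset, ((∏ q ∈ b, y q) * ∏ q ∈ s \ b, (1 - y q)) * β b := by
    have e1 : ∑ a ∈ s.powerset, ∑ b ∈ (s \ a).powerset, μ a b * σ a =
        ∑ a ∈ s.powerset, ((∏ q ∈ a, x q) * ∏ q ∈ s \ a, (1 - x q)) * σ a :=
      sum_congr rfl fun a ha => by rw [← sum_mul, hmargA a ha]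
    have e2 : ∑ a ∈ s.powerset, ∑ b ∈ (s \ a).powerset, μ a b * β b =
        ∑ b ∈ s.powerset, ((∏ q ∈ b, y q) * ∏ q ∈ s \ b, (1 - y q)) * β b := by
      rw [hswap]
      exact sum_congr rfl fun b hb => by rw [← sum_mul, hmargB b hb]
    have e3 : ∑ a ∈ s.powerset, ∑ b ∈ (s \ a).powerset, μ a b * (1 + η) = 1 + η := by
      simp_rw [← sum_mul]; rw [htotal, one_mul]
    rw [← e1, ← e2]
    nth_rewrite 2 [← e3]
    simp only [← sum_sub_distrib]
    exact sum_congr rfl fun a _ => sum_congr rfl fun b _ => by ring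
  have hμe : μ ∅ b₀ = (∏ q ∈ b₀, y q) * ∏ q ∈ s \ b₀, (1 - x q - y q) := by
    simp [hμ]
  have hμe0 : 0 ≤ μ ∅ b₀ := hμ0 ∅ (by simp) b₀ (by simpa using hb₀)
  rw [← hμe]
  have : μ ∅ b₀ * (g + η) ≤ μ ∅ b₀ * (1 + η - σ ∅ - β b₀) :=
    mul_le_mul_of_nonneg_left (by linarith) hμe0
  linarith

/-- The `k`-th elementary symmetric sum of `r` is read off from `∏ (1 + t r)`. -/
theorem pow_mul_sum_powersetCard_le (L : Finset ℕ) (r : ℕ → ℝ) (hr : ∀ q ∈ L, 0 ≤ r q)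
    (t : ℝ) (ht : 0 ≤ t) (k : ℕ) :
    t ^ k * ∑ T ∈ L.powersetCard k, ∏ q ∈ T, r q ≤ ∏ q ∈ L, (1 + t * r q) := by
  rw [prod_one_add, mul_sum]
  have : ∀ T ∈ L.powersetCard k, t ^ k * ∏ q ∈ T, r q = ∏ q ∈ T, t * r q := by
    intro T hT
    rw [prod_mul_distrib, prod_const, (mem_powersetCard.1 hT).2]
  rw [sum_congr rfl this]
  refine sum_le_sum_of_subset_of_nonneg ?_ ?_
  · intro T hT
    exact mem_powerset.2 (mem_powersetCard.1 hT).1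
  · intro T hT _
    exact prod_nonneg fun q hq => mul_nonneg ht (hr q (mem_powerset.1 hT hq))

theorem prod_one_add_mul_le (L : Finset ℕ) (r : ℕ → ℝ) (hr : ∀ q ∈ L, 0 ≤ r q)
    (t : ℝ) (ht : 0 ≤ t) (h : t * ∑ q ∈ L, r q ≤ 1 / 2) :
    ∏ q ∈ L, (1 + t * r q) ≤ 2 := by
  calc ∏ q ∈ L, (1 + t * r q) ≤ ∏ q ∈ L, Real.exp (t * r q) := by
        refine prod_le_prod (fun q hq => ?_) (fun q _ => ?_)
        · have := mul_nonneg ht (hr q hq); linarith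
        · linarith [Real.add_one_le_exp (t * r q)]
    _ = Real.exp (t * ∑ q ∈ L, r q) := by rw [← Real.exp_sum, mul_sum]
    _ ≤ Real.exp (1 / 2) := Real.exp_le_exp.2 h
    _ ≤ 2 := by
        have h1 : Real.exp (1 / 2) ^ 2 = Real.exp 1 := by
          rw [← Real.exp_nat_mul]; norm_num
        have h2 := Real.exp_one_lt_d9
        nlinarith [Real.exp_pos (1 / 2)]

/-- The case `r = 1`, `t = 1 / 8` of `pow_mul_sum_powersetCard_le`. -/
theorem choose_le_pow (n k : ℕ) : (n.choose k : ℝ) ≤ 8 ^ k * (9 / 8) ^ n := by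
  have h := pow_mul_sum_powersetCard_le (range n) (fun _ => 1) (by simp) (1 / 8) (by norm_num) k
  simp only [prod_const_one, sum_const, card_powersetCard, card_range, nsmul_eq_mul, mul_one,
    prod_const] at h
  have h8 : (8 : ℝ) ^ k * (1 / 8) ^ k = 1 := by rw [← mul_pow]; norm_num
  calc (n.choose k : ℝ) = 8 ^ k * ((1 / 8) ^ k * n.choose k) := by rw [← mul_assoc, h8, one_mul]
    _ ≤ 8 ^ k * (1 + 1 / 8) ^ n := by gcongr
    _ = _ := by norm_num

/-! ### Counting in cells and residue classes -/

/-- If there are `∏ q ∈ A, e q` elements of support `A` for each `A ⊆ s ∪ L`, and `e = 1` on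
`L`, this counts the elements whose support meets `s` in `a` and meets `L` inside `V`. -/
theorem card_cell {X : Finset ℕ} {supp : ℕ → Finset ℕ} {s L : Finset ℕ} {e : ℕ → ℕ}
    (hsupp : ∀ x ∈ X, supp x ⊆ s ∪ L)
    (hcount : ∀ A ⊆ s ∪ L, #{x ∈ X | supp x = A} = ∏ q ∈ A, e q)
    (hsL : Disjoint s L) (heL : ∀ q ∈ L, e q = 1) {a V : Finset ℕ} (ha : a ⊆ s) (hV : V ⊆ L) :
    #{x ∈ X | supp x ∩ s = a ∧ supp x ∩ L ⊆ V} = (∏ q ∈ a, e q) * 2 ^ #V := by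
  have hmaps : ∀ x ∈ X.filter (fun x => supp x ∩ s = a ∧ supp x ∩ L ⊆ V),
      supp x ∩ L ∈ V.powerset := by
    intro x hx
    exact mem_powerset.2 (mem_filter.1 hx).2.2
  rw [card_eq_sum_card_fiberwise hmaps]
  have hfib : ∀ t ∈ V.powerset,
      #{x ∈ X.filter (fun x => supp x ∩ s = a ∧ supp x ∩ L ⊆ V) | supp x ∩ L = t} =
      ∏ q ∈ a, e q := by
    intro t ht
    rw [mem_powerset] at ht
    have hdisj : Disjoint a t := disjoint_of_subset_left ha (disjoint_of_subset_right (ht.trans hV) hsL)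
    have heq : (X.filter (fun x => supp x ∩ s = a ∧ supp x ∩ L ⊆ V)).filter
        (fun x => supp x ∩ L = t) = X.filter (fun x => supp x = a ∪ t) := by
      ext x
      simp only [mem_filter]
      constructor
      · rintro ⟨⟨hx, h1, _⟩, h3⟩
        refine ⟨hx, ?_⟩
        rw [← h1, ← h3, ← inter_union_distrib_left]
        exact (inter_eq_left.2 (hsupp x hx)).symm
      · rintro ⟨hx, h1⟩
        have has : (a ∪ t) ∩ s = a := by
          rw [union_inter_distrib_right, inter_eq_left.2 ha,
            disjoint_iff_inter_eq_empty.1 (disjoint_of_subset_left (ht.trans hV) hsL.symm), union_empty]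
        have htL : (a ∪ t) ∩ L = t := by
          rw [union_inter_distrib_right, inter_eq_left.2 (ht.trans hV),
            disjoint_iff_inter_eq_empty.1 (disjoint_of_subset_left ha hsL), empty_union]
        rw [h1]
        exact ⟨⟨hx, has, htL.trans_subset ht⟩, htL⟩
    rw [heq, hcount _ (union_subset_union ha (ht.trans hV)), prod_union hdisj,
      prod_eq_one (fun q hq => heL q (hV (ht hq))), mul_one]
  rw [sum_congr rfl hfib, sum_const, card_powerset, smul_eq_mul, mul_comm]

theorem card_filter_modEq_le {F : Finset ℕ} {M m : ℕ} (hF : F ⊆ range M)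
    (h : ∀ i ∈ F, ∀ j ∈ F, i ≡ j [MOD m]) : #F ≤ M / m + 1 := by
  rw [← card_range (M / m + 1)]
  refine card_le_card_of_injOn (fun i => i / m) ?_ ?_
  · intro i hi
    have := mem_range.1 (hF hi)
    simp only [coe_range, Set.mem_Iio]
    exact Nat.lt_succ_of_le (Nat.div_le_div_right this.le)
  · intro i hi j hj hij
    have h1 : i % m = j % m := h i hi j hj
    have h2 : i / m = j / m := hij
    rw [← Nat.div_add_mod i m, ← Nat.div_add_mod j m, h1, h2]

theorem modEq_prod_of_forall {t : Finset ℕ} (ht : ∀ q ∈ t, q.Prime) {i j : ℕ}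
    (h : ∀ q ∈ t, i ≡ j [MOD q]) : i ≡ j [MOD ∏ q ∈ t, q] := by
  refine (Nat.modEq_iff_dvd.2 ?_)
  push_cast
  refine Finset.prod_dvd_of_coprime ?_ fun q hq => Nat.modEq_iff_dvd.1 (h q hq)
  intro p hp q hq hpq
  exact Nat.isCoprime_iff_coprime.2 ((Nat.coprime_primes (ht p hp) (ht q hq)).2 hpq)

/-- The integers below `M` which lie in the class `c q` for exactly those `q ∈ s` that belong to
`b`, and for all `q ∈ t`, fill `∏ q ∈ s \ b, (q - 1)` residue classes modulo the product of the
primes of `s` and `t`. -/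
theorem card_class_le {s t : Finset ℕ} (hs : ∀ q ∈ s, q.Prime) (ht : ∀ q ∈ t, q.Prime)
    (hst : Disjoint s t) (c : ℕ → ℕ) {b : Finset ℕ} (M : ℕ) :
    #{i ∈ range M | {q ∈ s | i ≡ c q [MOD q]} = b ∧ ∀ q ∈ t, i ≡ c q [MOD q]} ≤
      (M / ((∏ q ∈ s, q) * ∏ q ∈ t, q) + 1) * ∏ q ∈ s \ b, (q - 1) := by
  set F := (range M).filter
    (fun i => s.filter (fun q => i ≡ c q [MOD q]) = b ∧ ∀ q ∈ t, i ≡ c q [MOD q]) with hF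
  rcases F.eq_empty_or_nonempty with h0 | ⟨i₀, hi₀⟩
  · simp [h0]
  have hbs : b ⊆ s := by
    rw [← (mem_filter.1 hi₀).2.1]; exact filter_subset _ _
  -- The admissible residues modulo each prime of `s`.
  set box : (q : ℕ) → Finset ℕ := fun q =>
    if q ∈ b then {c q % q} else (range q).erase (c q % q) with hbox
  have hcard : #(s.pi box) = ∏ q ∈ s \ b, (q - 1) := by
    rw [card_pi, ← prod_sdiff hbs]
    have h1 : ∏ q ∈ b, #(box q) = 1 := prod_eq_one fun q hq => by simp [hbox, hq]
    rw [h1, mul_one]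
    refine prod_congr rfl fun q hq => ?_
    obtain ⟨hqs, hqb⟩ := mem_sdiff.1 hq
    simp only [hbox, hqb, if_false]
    rw [card_erase_of_mem (mem_range.2 (Nat.mod_lt _ (hs q hqs).pos)), card_range]
  rw [← hcard]
  refine card_le_mul_card_image_of_maps_to (f := fun i => fun q (_ : q ∈ s) => i % q) ?_ _ ?_
  · intro i hi
    have hi' := (mem_filter.1 hi).2.1
    refine mem_pi.2 fun q hq => ?_
    by_cases hqb : q ∈ b
    · have : q ∈ s.filter (fun q => i ≡ c q [MOD q]) := hi' ▸ hqb
      simp only [hbox, hqb, if_true, mem_singleton]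
      exact (mem_filter.1 this).2
    · have : ¬ i ≡ c q [MOD q] := fun h => hqb (hi' ▸ mem_filter.2 ⟨hq, h⟩)
      simp only [hbox, hqb, if_false, mem_erase, mem_range]
      exact ⟨this, Nat.mod_lt _ (hs q hq).pos⟩
  · intro v _
    refine card_filter_modEq_le ((filter_subset _ _).trans (filter_subset _ _)) ?_
    · intro i hi j hj
      rw [← prod_union hst]
      refine modEq_prod_of_forall (fun q hq => (mem_union.1 hq).elim (hs q) (ht q)) fun q hq => ?_
      obtain ⟨hi1, hi2⟩ := mem_filter.1 hi
      obtain ⟨hj1, hj2⟩ := mem_filter.1 hj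
      rcases mem_union.1 hq with hq | hq
      · have e1 := congrFun (congrFun (hi2.trans hj2.symm) q) hq
        exact e1
      · exact ((mem_filter.1 hi1).2.2 q hq).trans ((mem_filter.1 hj1).2.2 q hq).symm

/-! ### Configurations of small and large primes -/

/-- The primes `q ∈ T` whose chosen residue class `c q` modulo `q` contains `i`. -/
def hits (c : ℕ → ℕ) (T : Finset ℕ) (i : ℕ) : Finset ℕ := {q ∈ T | i ≡ c q [MOD q]}

/-- The primes of the non-tight part `R`, split into the small ones `s` (at most `m`) and the large
ones `L` (above `m`), with their exponents `e`; `m` is a hundredth of the number of primes. The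
field `recip` is the analytic input: the large primes have a tiny sum of reciprocals. -/
structure Config (m : ℕ) (s L : Finset ℕ) (e : ℕ → ℕ) : Prop where
  prime_s : ∀ q ∈ s, q.Prime
  prime_L : ∀ q ∈ L, q.Prime
  small : ∀ q ∈ s, q ≤ m
  large : ∀ q ∈ L, m < q
  one_le : ∀ q ∈ s, 1 ≤ e q
  add_two_le : ∀ q ∈ s, e q + 2 ≤ q
  eq_one : ∀ q ∈ L, e q = 1
  card_lower : 100 * m ≤ #s + #L
  card_upper : #s + #L < 100 * m + 100
  le_m : 2 ^ 100 ≤ m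
  recip : (2 : ℝ) ^ 100 * ∑ q ∈ L, (1 / q : ℝ) ≤ 1 / 2

/-- The number of divisors of `∏ q ∈ s ∪ L, q ^ e q` when `e = 1` on `L`. -/
def total (s L : Finset ℕ) (e : ℕ → ℕ) : ℕ := (∏ q ∈ s, (e q + 1)) * 2 ^ #L

theorem hits_subset (c : ℕ → ℕ) (T : Finset ℕ) (i : ℕ) : hits c T i ⊆ T := filter_subset _ _

/-- The exponentially small relative error in the density estimates. -/
noncomputable def eta (m : ℕ) : ℝ := 2 ^ 26 * (1 / 2) ^ (70 * m)

namespace Config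

variable {m : ℕ} {s L : Finset ℕ} {e : ℕ → ℕ}

theorem m_ge (h : Config m s L e) : 1000 ≤ m := le_trans (by norm_num) h.le_m

theorem disj (h : Config m s L e) : Disjoint s L := by
  rw [Finset.disjoint_left]
  intro q hs hL
  have := h.small q hs
  have := h.large q hL
  omega

theorem prod_s_pos (h : Config m s L e) : 0 < ∏ q ∈ s, q := prod_pos fun q hq => (h.prime_s q hq).pos

theorem prod_s_le (h : Config m s L e) : ∏ q ∈ s, q ≤ 2 ^ (2 * m) := by
  rw [pow_mul]
  refine le_trans ?_ (primorial_le_four_pow m)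
  rw [primorial]
  refine prod_le_prod_of_subset_of_one_le' ?_ ?_
  · intro q hq
    rw [mem_filter, mem_range]
    exact ⟨Nat.lt_succ_of_le (h.small q hq), h.prime_s q hq⟩
  · intro q hq _
    exact (mem_filter.1 hq).2.one_lt.le

theorem two_pow_le_total (h : Config m s L e) : 2 ^ (100 * m) ≤ total s L e := by
  calc 2 ^ (100 * m) ≤ 2 ^ (#s + #L) := Nat.pow_le_pow_right (by norm_num) h.card_lower
    _ = (∏ _q ∈ s, 2) * 2 ^ #L := by rw [pow_add, prod_const]
    _ ≤ total s L e := by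
      refine Nat.mul_le_mul_right _ (prod_le_prod' fun q hq => ?_)
      have := h.one_le q hq
      omega

theorem total_pos (h : Config m s L e) : 0 < total s L e :=
  lt_of_lt_of_le (by positivity) h.two_pow_le_total

theorem total_le (h : Config m s L e) : total s L e ≤ 2 ^ (103 * m) := by
  have hm := h.m_ge
  have hc := h.card_upper
  calc total s L e ≤ (∏ q ∈ s, q) * 2 ^ #L := by
        refine Nat.mul_le_mul_right _ (prod_le_prod' fun q hq => ?_)
        have := h.add_two_le q hq
        omega
    _ ≤ 2 ^ (2 * m) * 2 ^ (101 * m) :=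
        Nat.mul_le_mul h.prod_s_le (Nat.pow_le_pow_right (by norm_num) (by omega))
    _ = 2 ^ (103 * m) := by rw [← pow_add]; congr 1; omega

theorem eta_pos : 0 < eta m := by unfold eta; positivity

theorem prod_s_le_total (h : Config m s L e) :
    ((∏ q ∈ s, q : ℕ) : ℝ) ≤ (1 / 2) ^ (98 * m) * total s L e := by
  have h1 : ((∏ q ∈ s, q : ℕ) : ℝ) ≤ 2 ^ (2 * m) := by exact_mod_cast h.prod_s_le
  have h2 : (2 : ℝ) ^ (100 * m) ≤ total s L e := by exact_mod_cast h.two_pow_le_total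
  calc ((∏ q ∈ s, q : ℕ) : ℝ) ≤ 2 ^ (2 * m) := h1
    _ = (1 / 2) ^ (98 * m) * 2 ^ (100 * m) := by
        rw [show 100 * m = 98 * m + 2 * m by ring, pow_add, ← mul_assoc, ← mul_pow]; norm_num
    _ ≤ _ := by gcongr

/-- A union bound over the `k`-subsets `T` of `L`. The first factor is the expected number of
integers below `total s L e` whose set of small hits is `b`; the last summand comes from rounding up
the number of integers in each residue class. -/
theorem card_le_of_forall_le_card_hits (h : Config m s L e) (c : ℕ → ℕ) (b : Finset ℕ)
    (G : Finset ℕ) (hG : G ⊆ range (total s L e)) (hGb : ∀ i ∈ G, hits c s i = b)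
    (k : ℕ) (hk : ∀ i ∈ G, k ≤ #(hits c L i)) :
    (#G : ℝ) ≤ (total s L e / (∏ q ∈ s, q : ℕ) * (∏ q ∈ s \ b, (q - 1) : ℕ)) *
      (∑ T ∈ L.powersetCard k, ∏ q ∈ T, (1 / q : ℝ) +
        (∏ q ∈ s, q : ℕ) / total s L e * (#L).choose k) := by
  set M := total s L e with hM
  set Q := ∏ q ∈ s, q with hQ
  set v := ∏ q ∈ s \ b, (q - 1) with hv
  have hM0 : (0 : ℝ) < M := by exact_mod_cast h.total_pos
  have hQ0 : (0 : ℝ) < Q := by exact_mod_cast h.prod_s_pos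
  have hsub : G ⊆ (L.powersetCard k).biUnion fun T =>
      {i ∈ range M | {q ∈ s | i ≡ c q [MOD q]} = b ∧ ∀ q ∈ T, i ≡ c q [MOD q]} := by
    intro i hi
    obtain ⟨T, hT, hTk⟩ := exists_subset_card_eq (hk i hi)
    refine mem_biUnion.2 ⟨T, mem_powersetCard.2 ⟨hT.trans (hits_subset _ _ _), hTk⟩, ?_⟩
    exact mem_filter.2 ⟨hG hi, hGb i hi, fun q hq => (mem_filter.1 (hT hq)).2⟩
  have hcell : ∀ T ∈ L.powersetCard k,
      ((#{i ∈ range M | {q ∈ s | i ≡ c q [MOD q]} = b ∧ ∀ q ∈ T, i ≡ c q [MOD q]} : ℕ) : ℝ) ≤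
        (M / Q * ∏ q ∈ T, (1 / q : ℝ) + 1) * v := by
    intro T hT
    have hTL := (mem_powersetCard.1 hT).1
    have h1 := card_class_le h.prime_s (fun q hq => h.prime_L q (hTL hq))
      (disjoint_of_subset_right hTL h.disj) c (b := b) M
    refine (Nat.cast_le.2 h1).trans ?_
    rw [← hQ, ← hv]
    push_cast
    refine mul_le_mul_of_nonneg_right ?_ (by positivity)
    have h2 : ((M / (Q * ∏ q ∈ T, q) : ℕ) : ℝ) ≤ M / (Q * ∏ q ∈ T, q : ℕ) := Nat.cast_div_le
    refine add_le_add (h2.trans_eq ?_) le_rfl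
    push_cast
    rw [prod_div_distrib, prod_const_one, div_mul_div_comm, mul_one]
  calc (#G : ℝ) ≤ ∑ T ∈ L.powersetCard k,
        ((#{i ∈ range M | {q ∈ s | i ≡ c q [MOD q]} = b ∧ ∀ q ∈ T, i ≡ c q [MOD q]} : ℕ) : ℝ) := by
        exact_mod_cast (card_le_card hsub).trans card_biUnion_le
    _ ≤ ∑ T ∈ L.powersetCard k, (M / Q * ∏ q ∈ T, (1 / q : ℝ) + 1) * v := sum_le_sum hcell
    _ = _ := by
        rw [← sum_mul, sum_add_distrib, ← mul_sum, sum_const, card_powersetCard, nsmul_eq_mul]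
        field_simp

theorem sum_powersetCard_le (h : Config m s L e) (k : ℕ) :
    ∑ T ∈ L.powersetCard k, ∏ q ∈ T, (1 / q : ℝ) ≤ 2 * (1 / 2) ^ (100 * k) := by
  have hr : ∀ q ∈ L, (0 : ℝ) ≤ 1 / q := fun q _ => by positivity
  have h1 := (pow_mul_sum_powersetCard_le L (fun q => (1 / q : ℝ)) hr (2 ^ 100) (by positivity) k).trans
    (prod_one_add_mul_le L _ hr _ (by positivity) h.recip)
  rw [← pow_mul] at h1
  have h2 : (1 / 2 : ℝ) ^ (100 * k) * 2 ^ (100 * k) = 1 := by rw [← mul_pow]; norm_num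
  calc _ = (1 / 2 : ℝ) ^ (100 * k) * (2 ^ (100 * k) * ∑ T ∈ L.powersetCard k, ∏ q ∈ T, (1 / q : ℝ)) := by
        rw [← mul_assoc, h2, one_mul]
    _ ≤ (1 / 2 : ℝ) ^ (100 * k) * 2 := by gcongr
    _ = _ := mul_comm _ _

theorem choose_error_le (h : Config m s L e) {k : ℕ} (hk : k ≤ m) :
    (∏ q ∈ s, q : ℕ) / total s L e * ((#L).choose k : ℝ) ≤ 2 ^ 25 * (1 / 2) ^ (70 * m) := by
  have hM0 : (0 : ℝ) < total s L e := by exact_mod_cast h.total_pos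
  have h1 : ((∏ q ∈ s, q : ℕ) : ℝ) / total s L e ≤ (1 / 2) ^ (98 * m) :=
    (div_le_iff₀ hM0).2 h.prod_s_le_total
  have h2 : ((#L).choose k : ℝ) ≤ 2 ^ (3 * m) * 2 ^ (25 * m + 25) := by
    refine (choose_le_pow _ _).trans ?_
    have hc := h.card_upper
    refine mul_le_mul ?_ ?_ (by positivity) (by positivity)
    · rw [pow_mul]
      norm_num
      exact pow_le_pow_right₀ (by norm_num) hk
    · calc (9 / 8 : ℝ) ^ #L ≤ (9 / 8) ^ (4 * (25 * m + 25)) :=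
            pow_le_pow_right₀ (by norm_num) (by omega)
        _ ≤ 2 ^ (25 * m + 25) := by
            rw [pow_mul]
            exact pow_le_pow_left₀ (by norm_num) (by norm_num) _
  calc _ ≤ (1 / 2 : ℝ) ^ (98 * m) * (2 ^ (3 * m) * 2 ^ (25 * m + 25)) := by gcongr
    _ = 2 ^ 25 * ((1 / 2) ^ (70 * m) * ((1 / 2) ^ (28 * m) * 2 ^ (28 * m))) := by
        rw [← mul_assoc ((1 / 2 : ℝ) ^ (70 * m)), ← pow_add, ← pow_add]
        rw [show 70 * m + 28 * m = 98 * m by ring, show 3 * m + (25 * m + 25) = 25 + 28 * m by ring,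
          pow_add]
        ring
    _ = _ := by rw [← mul_pow]; norm_num

/-- The case `k = 0`: every class has at most its expected size, up to the error `eta m`. -/
theorem bound_all (h : Config m s L e) (c : ℕ → ℕ) (b : Finset ℕ)
    (G : Finset ℕ) (hG : G ⊆ range (total s L e)) (hGb : ∀ i ∈ G, hits c s i = b) :
    (#G : ℝ) ≤ (total s L e / (∏ q ∈ s, q : ℕ) * (∏ q ∈ s \ b, (q - 1) : ℕ)) * (1 + eta m) := by
  refine (h.card_le_of_forall_le_card_hits c b G hG hGb 0 (by simp)).trans ?_
  refine mul_le_mul_of_nonneg_left ?_ (by positivity)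
  have h1 := h.choose_error_le (k := 0) (by omega)
  have h2 : (0 : ℝ) < (1 / 2) ^ (70 * m) := by positivity
  simp only [powersetCard_zero, sum_singleton, prod_empty]
  unfold eta
  linarith

theorem bound_small (h : Config m s L e) (c : ℕ → ℕ) (b : Finset ℕ)
    (G : Finset ℕ) (hG : G ⊆ range (total s L e)) (hGb : ∀ i ∈ G, hits c s i = b)
    {k : ℕ} (hk1 : 1 ≤ k) (hkm : k ≤ m) (hk : ∀ i ∈ G, k ≤ #(hits c L i)) :
    (#G : ℝ) ≤ (total s L e / (∏ q ∈ s, q : ℕ) * (∏ q ∈ s \ b, (q - 1) : ℕ)) *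
      (1 / 2) ^ (k + 1) := by
  refine (h.card_le_of_forall_le_card_hits c b G hG hGb k hk).trans ?_
  refine mul_le_mul_of_nonneg_left ?_ (by positivity)
  have hm := h.m_ge
  have h1 : 2 * (1 / 2 : ℝ) ^ (100 * k) ≤ 2 * (1 / 2) ^ (k + 3) := by
    gcongr ?_ * ?_
    exact pow_le_pow_of_le_one (by norm_num) (by norm_num) (by omega)
  have h2 : 2 ^ 25 * (1 / 2 : ℝ) ^ (70 * m) ≤ 2 ^ 25 * (1 / 2) ^ (k + 27) := by
    gcongr ?_ * ?_
    exact pow_le_pow_of_le_one (by norm_num) (by norm_num) (by omega)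
  have h3 := h.sum_powersetCard_le k
  have h4 := h.choose_error_le hkm
  have h5 : 2 * (1 / 2 : ℝ) ^ (k + 3) + 2 ^ 25 * (1 / 2) ^ (k + 27) = (1 / 2) ^ (k + 1) := by
    simp only [pow_add]; norm_num; ring
  linarith

theorem bound_big (h : Config m s L e) (c : ℕ → ℕ) (b : Finset ℕ)
    (G : Finset ℕ) (hG : G ⊆ range (total s L e)) (hGb : ∀ i ∈ G, hits c s i = b)
    (hk : ∀ i ∈ G, m ≤ #(hits c L i)) :
    (#G : ℝ) ≤ (total s L e / (∏ q ∈ s, q : ℕ) * (∏ q ∈ s \ b, (q - 1) : ℕ)) * eta m := by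
  refine (h.card_le_of_forall_le_card_hits c b G hG hGb m hk).trans ?_
  refine mul_le_mul_of_nonneg_left ?_ (by positivity)
  have h3 := h.sum_powersetCard_le m
  have h4 := h.choose_error_le le_rfl
  have h1 : (1 / 2 : ℝ) ^ (100 * m) ≤ (1 / 2) ^ (70 * m) :=
    pow_le_pow_of_le_one (by norm_num) (by norm_num) (by omega)
  unfold eta
  have h2 : (0 : ℝ) < (1 / 2) ^ (70 * m) := by positivity
  linarith

/-- Two distinct integers below `total s L e` cannot both lie in the classes of many large primes:
they are congruent modulo the product of the common ones. -/
theorem exists_card_hits_le (h : Config m s L e) (c : ℕ → ℕ) {i j : ℕ}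
    (hi : i < total s L e) (hj : j < total s L e) (hij : i ≠ j) :
    #(hits c L i) ≤ 60 * m ∨ #(hits c L j) ≤ 60 * m := by
  have hm := h.m_ge
  set T := hits c L i ∩ hits c L j with hT
  have hTL : T ⊆ L := inter_subset_left.trans (hits_subset _ _ _)
  have hmod : i ≡ j [MOD ∏ q ∈ T, q] :=
    modEq_prod_of_forall (fun q hq => h.prime_L q (hTL hq)) fun q hq =>
      (mem_filter.1 (mem_inter.1 hq).1).2.trans (mem_filter.1 (mem_inter.1 hq).2).2.symm
  have hlt : ∏ q ∈ T, q < total s L e := by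
    by_contra hcon
    push Not at hcon
    exact hij (Nat.ModEq.eq_of_lt_of_lt hmod (by omega) (by omega))
  have hge : (2 ^ 100) ^ #T ≤ ∏ q ∈ T, q :=
    Finset.pow_card_le_prod _ _ _ fun q hq => h.le_m.trans (h.large q (hTL hq)).le
  have hcardT : #T ≤ 2 * m := by
    rw [← pow_mul] at hge
    have h1 := (Nat.pow_lt_pow_iff_right (by norm_num : 1 < 2)).1 (hge.trans_lt (hlt.trans_le h.total_le))
    omega
  have hunion : #(hits c L i ∪ hits c L j) ≤ #L :=
    card_le_card (union_subset (hits_subset _ _ _) (hits_subset _ _ _))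
  have := card_union_add_card_inter (hits c L i) (hits c L j)
  have hc := h.card_upper
  rw [← hT] at this
  omega

end Config

/-! ### Hall's condition and the matching -/


namespace Config

variable {m : ℕ} {s L : Finset ℕ} {e : ℕ → ℕ} {X : Finset ℕ} {supp : ℕ → Finset ℕ}

/-- A set `F` of elements with small support `a`, none of which is compatible with an integer `i`
whose small hits avoid `a`, misses all elements whose large support avoids the large hits of `i`. -/
theorem card_S_le (h : Config m s L e) (hsupp : ∀ x ∈ X, supp x ⊆ s ∪ L)
    (hcount : ∀ A ⊆ s ∪ L, #{x ∈ X | supp x = A} = ∏ q ∈ A, e q) (c : ℕ → ℕ)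
    {a : Finset ℕ} (ha : a ⊆ s) {F : Finset ℕ} (hF : F ⊆ {x ∈ X | supp x ∩ s = a})
    {i : ℕ} (hia : Disjoint a (hits c s i))
    (hFi : ∀ x ∈ F, ¬ Disjoint (supp x) (hits c (s ∪ L) i)) :
    (#F : ℝ) ≤ ((∏ q ∈ a, e q : ℕ) * 2 ^ #L) * (1 - (1 / 2) ^ #(hits c L i)) := by
  set B := hits c L i with hB
  have hBL : B ⊆ L := hits_subset _ _ _
  set F' := {x ∈ X | supp x ∩ s = a ∧ supp x ∩ L ⊆ L \ B} with hF'
  have hc1 : #F' = (∏ q ∈ a, e q) * 2 ^ #(L \ B) :=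
    card_cell hsupp hcount h.disj h.eq_one ha sdiff_subset
  have hc2 : #{x ∈ X | supp x ∩ s = a ∧ supp x ∩ L ⊆ L} = (∏ q ∈ a, e q) * 2 ^ #L :=
    card_cell hsupp hcount h.disj h.eq_one ha subset_rfl
  have hdisj : Disjoint F F' := by
    rw [Finset.disjoint_left]
    intro x hx hx'
    refine hFi x hx ?_
    obtain ⟨hxX, hxa, hxB⟩ := mem_filter.1 hx'
    rw [Finset.disjoint_left]
    intro q hq hq'
    obtain ⟨hq1, hq2⟩ := mem_filter.1 hq'
    rcases mem_union.1 hq1 with hqs | hqL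
    · exact Finset.disjoint_left.1 hia (hxa ▸ mem_inter.2 ⟨hq, hqs⟩) (mem_filter.2 ⟨hqs, hq2⟩)
    · exact (mem_sdiff.1 (hxB (mem_inter.2 ⟨hq, hqL⟩))).2 (mem_filter.2 ⟨hqL, hq2⟩)
  have hle : #F + #F' ≤ (∏ q ∈ a, e q) * 2 ^ #L := by
    rw [← card_union_of_disjoint hdisj, ← hc2]
    refine card_le_card (union_subset ?_ ?_)
    · intro x hx
      obtain ⟨h1, h2⟩ := mem_filter.1 (hF hx)
      exact mem_filter.2 ⟨h1, h2, inter_subset_right⟩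
    · intro x hx
      obtain ⟨h1, h2, _⟩ := mem_filter.1 hx
      exact mem_filter.2 ⟨h1, h2, inter_subset_right⟩
  have hle' : (#F : ℝ) + (∏ q ∈ a, e q : ℕ) * 2 ^ #(L \ B) ≤ (∏ q ∈ a, e q : ℕ) * 2 ^ #L := by
    rw [hc1] at hle
    exact_mod_cast hle
  have hpow : (2 : ℝ) ^ #L * (1 / 2) ^ #B = 2 ^ #(L \ B) := by
    rw [← card_sdiff_add_card_eq_card hBL, pow_add, mul_assoc, ← mul_pow]; norm_num
  rw [mul_sub, mul_one, mul_assoc, hpow]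
  linarith

theorem card_X (h : Config m s L e) (hsupp : ∀ x ∈ X, supp x ⊆ s ∪ L)
    (hcount : ∀ A ⊆ s ∪ L, #{x ∈ X | supp x = A} = ∏ q ∈ A, e q) : #X = total s L e := by
  have hmaps : ∀ x ∈ X, supp x ∩ s ∈ s.powerset := fun x _ => mem_powerset.2 inter_subset_right
  rw [card_eq_sum_card_fiberwise hmaps, total, prod_add_one, sum_mul]
  refine sum_congr rfl fun a ha => ?_
  rw [← card_cell hsupp hcount h.disj h.eq_one (mem_powerset.1 ha) subset_rfl]
  congr 1
  ext x
  simp [inter_subset_right]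

/-- Hall's condition, for sets `W` of integers to be matched into `X`. -/
theorem hall (h : Config m s L e) (hsupp : ∀ x ∈ X, supp x ⊆ s ∪ L)
    (hcount : ∀ A ⊆ s ∪ L, #{x ∈ X | supp x = A} = ∏ q ∈ A, e q) (c : ℕ → ℕ)
    {W : Finset ℕ} (hW : W ⊆ range (total s L e)) :
    #W ≤ #{x ∈ X | ∃ i ∈ W, Disjoint (supp x) (hits c (s ∪ L) i)} := by
  by_contra! hcon
  have hm := h.m_ge
  set M := total s L e with hM
  set Q := ∏ q ∈ s, q with hQ
  have hM0 : (0 : ℝ) < M := by exact_mod_cast h.total_pos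
  have hQ0 : (0 : ℝ) < Q := by exact_mod_cast h.prod_s_pos
  set S := {x ∈ X | ¬ ∃ i ∈ W, Disjoint (supp x) (hits c (s ∪ L) i)} with hS
  have hXM : #X = M := h.card_X hsupp hcount
  have hSN : #{x ∈ X | ∃ i ∈ W, Disjoint (supp x) (hits c (s ∪ L) i)} + #S = #X := by
    rw [hS]
    convert card_filter_add_card_filter_not (s := X)
      (fun x => ∃ i ∈ W, Disjoint (supp x) (hits c (s ∪ L) i))
  have hSW : M < #S + #W := by omega
  have hWM : #W ≤ M := by simpa using card_le_card hW
  have hS0 : S.Nonempty := by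
    rw [← card_pos]; omega
  have hSX : S ⊆ X := filter_subset _ _
  have hSdisj : ∀ x ∈ S, ∀ i ∈ W, ¬ Disjoint (supp x) (hits c (s ∪ L) i) := by
    intro x hx i hi hd
    exact (mem_filter.1 hx).2 ⟨i, hi, hd⟩
  -- `u a` and `v b` are the sizes, exact and expected, of the groups containing `Sa a` and `Wb b`.
  set Sa : Finset ℕ → Finset ℕ := fun a => {x ∈ S | supp x ∩ s = a} with hSa
  set Wb : Finset ℕ → Finset ℕ := fun b => {i ∈ W | hits c s i = b} with hWb
  set u : Finset ℕ → ℝ := fun a => (∏ q ∈ a, e q : ℕ) * 2 ^ #L with hu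
  set v : Finset ℕ → ℝ := fun b => M / Q * (∏ q ∈ s \ b, (q - 1) : ℕ) with hv
  have hu0 : ∀ a ⊆ s, 0 < u a := by
    intro a ha
    have : 0 < ∏ q ∈ a, e q := prod_pos fun q hq => h.one_le q (ha hq)
    have : (0 : ℝ) < (∏ q ∈ a, e q : ℕ) := by exact_mod_cast this
    positivity
  have hv0 : ∀ b, 0 < v b := by
    intro b
    have : 0 < ∏ q ∈ s \ b, (q - 1) := prod_pos fun q hq => by
      have := (h.prime_s q (sdiff_subset hq)).two_le
      omega
    have : (0 : ℝ) < (∏ q ∈ s \ b, (q - 1) : ℕ) := by exact_mod_cast this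
    positivity
  have hSasub : ∀ a, Sa a ⊆ {x ∈ X | supp x ∩ s = a} := fun a x hx =>
    mem_filter.2 ⟨hSX (mem_filter.1 hx).1, (mem_filter.1 hx).2⟩
  have hWbM : ∀ b, Wb b ⊆ range M := fun b => (filter_subset _ _).trans hW
  have hWbb : ∀ b, ∀ i ∈ Wb b, hits c s i = b := fun b i hi => (mem_filter.1 hi).2
  have hWbW : ∀ b, ∀ i ∈ Wb b, i ∈ W := fun b i hi => (mem_filter.1 hi).1
  -- An integer of `W` of class disjoint from `a` bounds the density of `S_a`.
  have hσ : ∀ a ⊆ s, ∀ i ∈ W, Disjoint a (hits c s i) →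
      (#(Sa a) : ℝ) / u a ≤ 1 - (1 / 2) ^ #(hits c L i) := by
    intro a ha i hi hd
    rw [div_le_iff₀' (hu0 a ha)]
    exact h.card_S_le hsupp hcount c ha (hSasub a) hd
      fun x hx => hSdisj x (mem_filter.1 hx).1 i hi
  have hσ1 : ∀ a ⊆ s, (#(Sa a) : ℝ) / u a ≤ 1 := by
    intro a ha
    rw [div_le_one (hu0 a ha)]
    have h1 := card_cell hsupp hcount h.disj h.eq_one ha (subset_refl L)
    have h2 : #(Sa a) ≤ (∏ q ∈ a, e q) * 2 ^ #L := by
      rw [← h1]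
      refine card_le_card ((hSasub a).trans ?_)
      intro x hx
      obtain ⟨h3, h4⟩ := mem_filter.1 hx
      exact mem_filter.2 ⟨h3, h4, inter_subset_right⟩
    simp only [hu]
    exact_mod_cast h2
  have hβ1 : ∀ b, (#(Wb b) : ℝ) / v b ≤ 1 + eta m := by
    intro b
    rw [div_le_iff₀' (hv0 b)]
    exact h.bound_all c b _ (hWbM b) (hWbb b)
  have hβs : ∀ b k, 1 ≤ k → k ≤ m → (∀ i ∈ Wb b, k ≤ #(hits c L i)) →
      (#(Wb b) : ℝ) / v b ≤ (1 / 2) ^ (k + 1) := by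
    intro b k h1 h2 h3
    rw [div_le_iff₀' (hv0 b)]
    exact h.bound_small c b _ (hWbM b) (hWbb b) h1 h2 h3
  have hβb : ∀ b, (∀ i ∈ Wb b, m ≤ #(hits c L i)) → (#(Wb b) : ℝ) / v b ≤ eta m := by
    intro b h3
    rw [div_le_iff₀' (hv0 b)]
    exact h.bound_big c b _ (hWbM b) (hWbb b) h3
  have hη0 : 0 < eta m := eta_pos
  -- Members of `S_a` force every integer of `W_b` to be hit by a large prime.
  have hpos : ∀ a ⊆ s, (Sa a).Nonempty → ∀ i ∈ W, Disjoint a (hits c s i) →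
      1 ≤ #(hits c L i) := by
    intro a ha hne i hi hd
    by_contra! h0
    have h1 := hσ a ha i hi hd
    have h2 : (0 : ℝ) < #(Sa a) / u a := div_pos (by exact_mod_cast hne.card_pos) (hu0 a ha)
    rw [Nat.lt_one_iff.1 h0] at h1
    norm_num at h1
    linarith
  have hpair : ∀ a ⊆ s, ∀ b ⊆ s, Disjoint a b →
      (#(Sa a) : ℝ) / u a + #(Wb b) / v b ≤ 1 + eta m := by
    intro a ha b hb hab
    rcases (Wb b).eq_empty_or_nonempty with hWe | hWne
    · rw [hWe]
      simp only [card_empty, Nat.cast_zero, zero_div, add_zero]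
      linarith [hσ1 a ha]
    rcases (Sa a).eq_empty_or_nonempty with hSe | hSne
    · rw [hSe]
      simp only [card_empty, Nat.cast_zero, zero_div, zero_add]
      exact hβ1 b
    obtain ⟨i, hi, hmin⟩ := exists_min_image (Wb b) (fun i => #(hits c L i)) hWne
    have hdi : Disjoint a (hits c s i) := by rw [hWbb b i hi]; exact hab
    have h1 := hσ a ha i (hWbW b i hi) hdi
    have h2 := hpos a ha hSne i (hWbW b i hi) hdi
    have h4 : (0 : ℝ) < (1 / 2) ^ #(hits c L i) := by positivity
    rcases le_total (#(hits c L i)) m with hk | hk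
    · have h3 := hβs b _ h2 hk hmin
      rw [pow_succ] at h3
      linarith
    · have h3 := hβb b fun j hj => hk.trans (hmin j hj)
      linarith
  have heta : eta m ≤ (1 / 2) ^ (4 * m) * (1 / 2) ^ (60 * m + 1) := by
    unfold eta
    rw [← pow_add]
    calc (2 : ℝ) ^ 26 * (1 / 2) ^ (70 * m) ≤ 2 ^ 26 * (1 / 2) ^ (26 + (4 * m + (60 * m + 1))) := by
          gcongr ?_ * ?_
          exact pow_le_pow_of_le_one (by norm_num) (by norm_num) (by omega)
      _ = _ := by rw [pow_add (1 / 2 : ℝ) 26, ← mul_assoc]; norm_num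
  have heta' : eta m ≤ (1 / 2) ^ (60 * m + 1) := by
    refine heta.trans (mul_le_of_le_one_left (by positivity) ?_)
    exact pow_le_one₀ (by norm_num) (by norm_num)
  -- The strictly deficient pair of classes `(∅, b₀)`.
  have hgap : ∃ b₀ ⊆ s, (#(Sa ∅) : ℝ) / u ∅ + #(Wb b₀) / v b₀ ≤ 1 - (1 / 2) ^ (60 * m + 1) := by
    have hWne : W.Nonempty := by
      rw [← card_pos]
      omega
    obtain ⟨i, hi, hmin⟩ := exists_min_image W (fun i => #(hits c L i)) hWne
    have h1 := hσ ∅ (empty_subset _) i hi (disjoint_empty_left _)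
    rcases Nat.eq_zero_or_pos (#(hits c L i)) with hk0 | hkpos
    · obtain ⟨x, hx⟩ := hS0
      have hSx : (Sa (supp x ∩ s)).Nonempty := ⟨x, mem_filter.2 ⟨hx, rfl⟩⟩
      refine ⟨∅, empty_subset _, ?_⟩
      have h2 := hβs ∅ 1 le_rfl (by omega) fun j hj =>
        hpos _ inter_subset_right hSx j (hWbW _ j hj) (by rw [hWbb _ j hj]; exact disjoint_empty_right _)
      rw [hk0] at h1
      have h3 : (1 / 2 : ℝ) ^ (60 * m + 1) ≤ (1 / 2) ^ 1 :=
        pow_le_pow_of_le_one (by norm_num) (by norm_num) (by omega)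
      norm_num at h1 h2 h3 ⊢
      linarith
    · have hk60 : #(hits c L i) ≤ 60 * m := by
        -- If `W` had one element, every divisor would be in `S`, including those of empty support.
        have hW2 : 1 < #W := by
          by_contra! hW1
          have hSM : #S = M := by
            have := card_le_card hSX
            omega
          have hSeq : S = X := eq_of_subset_of_card_le hSX (by omega)
          have h0 := hcount ∅ (empty_subset _)
          rw [prod_empty] at h0
          obtain ⟨x, hx⟩ := card_pos.1 (h0 ▸ one_pos)
          obtain ⟨hxX, hx0⟩ := mem_filter.1 hx
          refine hSdisj x (hSeq ▸ hxX) i hi ?_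
          rw [hx0]
          exact disjoint_empty_left _
        obtain ⟨j, hj, hji⟩ := exists_mem_ne hW2 i
        rcases h.exists_card_hits_le c (mem_range.1 (hW hi)) (mem_range.1 (hW hj)) hji.symm with h2 | h2
        · exact h2
        · exact (hmin j hj).trans h2
      refine ⟨hits c s i, hits_subset _ _ _, ?_⟩
      have h5 : (1 / 2 : ℝ) ^ (60 * m + 1) ≤ (1 / 2) ^ (#(hits c L i) + 1) :=
        pow_le_pow_of_le_one (by norm_num) (by norm_num) (by omega)
      have h6 : (#(Wb (hits c s i)) : ℝ) / v (hits c s i) ≤ (1 / 2) ^ (#(hits c L i) + 1) := by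
        rcases le_total (#(hits c L i)) m with hk | hk
        · exact hβs _ _ hkpos hk fun j hj => hmin j (hWbW _ j hj)
        · exact (hβb _ fun j hj => hk.trans (hmin j (hWbW _ j hj))).trans (heta'.trans h5)
      have h7 : (1 / 2 : ℝ) ^ (#(hits c L i) + 1) = (1 / 2) ^ #(hits c L i) * (1 / 2) := pow_succ _ _
      rw [h7] at h5 h6
      linarith
  obtain ⟨b₀, hb₀, hg⟩ := hgap
  have hq0 : ∀ q ∈ s, (0 : ℝ) < q := fun q hq => by exact_mod_cast (h.prime_s q hq).pos
  have heq : ∀ q ∈ s, (e q : ℝ) + 2 ≤ q := fun q hq => by exact_mod_cast h.add_two_le q hq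
  set x : ℕ → ℝ := fun q => e q / (e q + 1) with hx
  set y : ℕ → ℝ := fun q => 1 / q with hy
  -- The coupling needs `x q + y q ≤ 1`; the quantitative slack `1 / q ^ 2` bounds the weight of
  -- the pair `(∅, b₀)` from below by `1 / Q ^ 2`.
  have hslack : ∀ q ∈ s, (1 / q : ℝ) ^ 2 ≤ 1 - x q - y q := by
    intro q hq
    have h1 := hq0 q hq
    have h2 := heq q hq
    have he0 : (0 : ℝ) ≤ e q := Nat.cast_nonneg _
    have h3 : 1 - x q - y q - (1 / q : ℝ) ^ 2 =
        ((q : ℝ) ^ 2 - (e q + 1) * (q + 1)) / ((e q + 1) * q ^ 2) := by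
      simp only [hx, hy]
      field_simp
      ring
    have h4 : 0 ≤ ((q : ℝ) ^ 2 - (e q + 1) * (q + 1)) / ((e q + 1) * q ^ 2) := by
      refine div_nonneg ?_ (by positivity)
      nlinarith
    linarith
  have hcoup := coupling_le s x y (fun q _ => by simp only [hx]; positivity)
    (fun q _ => by simp only [hy]; positivity)
    (fun q hq => by linarith [hslack q hq, sq_nonneg (1 / q : ℝ)])
    (fun a => #(Sa a) / u a) (fun b => #(Wb b) / v b) (eta m) ((1 / 2) ^ (60 * m + 1))
    hpair b₀ hb₀ hg
  have hsumS : ∑ a ∈ s.powerset, ((∏ q ∈ a, x q) * ∏ q ∈ s \ a, (1 - x q)) * (#(Sa a) / u a) =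
      #S / M := by
    have hmaps : ∀ z ∈ S, supp z ∩ s ∈ s.powerset := fun z _ => mem_powerset.2 inter_subset_right
    rw [card_eq_sum_card_fiberwise hmaps, Nat.cast_sum, sum_div]
    refine sum_congr rfl fun a ha => ?_
    rw [mem_powerset] at ha
    have h1 : ∀ q ∈ s \ a, 1 - x q = 1 / ((e q : ℝ) + 1) := fun q _ => by
      simp only [hx]; field_simp; ring
    have h2 : (M : ℝ) = ((∏ q ∈ s \ a, ((e q : ℝ) + 1)) * ∏ q ∈ a, ((e q : ℝ) + 1)) * 2 ^ #L := by
      rw [prod_sdiff ha, hM, total]; push_cast; rfl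
    have h3 : (∏ q ∈ a, (e q : ℝ)) ≠ 0 := prod_ne_zero_iff.2 fun q hq => by
      have := h.one_le q (ha hq)
      positivity
    have h4 : (∏ q ∈ a, ((e q : ℝ) + 1)) ≠ 0 := prod_ne_zero_iff.2 fun q _ => by positivity
    have h5 : (∏ q ∈ s \ a, ((e q : ℝ) + 1)) ≠ 0 := prod_ne_zero_iff.2 fun q _ => by positivity
    rw [prod_congr rfl h1, h2]
    simp only [hx, hu, prod_div_distrib, prod_const_one, Nat.cast_prod]
    field_simp
    simp only [hSa]
  have hsumW : ∑ b ∈ s.powerset, ((∏ q ∈ b, y q) * ∏ q ∈ s \ b, (1 - y q)) * (#(Wb b) / v b) =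
      #W / M := by
    have hmaps : ∀ z ∈ W, hits c s z ∈ s.powerset := fun z _ => mem_powerset.2 (hits_subset _ _ _)
    rw [card_eq_sum_card_fiberwise hmaps, Nat.cast_sum, sum_div]
    refine sum_congr rfl fun b hb => ?_
    rw [mem_powerset] at hb
    have h1 : ∀ q ∈ s \ b, 1 - y q = ((q - 1 : ℕ) : ℝ) / q := fun q hq => by
      have h0 := h.prime_s q (sdiff_subset hq)
      have := hq0 q (sdiff_subset hq)
      rw [Nat.cast_sub h0.one_lt.le]
      simp only [hy]; field_simp; simp
    have h2 : (Q : ℝ) = (∏ q ∈ s \ b, (q : ℝ)) * ∏ q ∈ b, (q : ℝ) := by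
      rw [prod_sdiff hb, hQ]; push_cast; rfl
    have h3 : (∏ q ∈ s \ b, ((q - 1 : ℕ) : ℝ)) ≠ 0 := prod_ne_zero_iff.2 fun q hq => by
      have := (h.prime_s q (sdiff_subset hq)).two_le
      exact Nat.cast_ne_zero.2 (by omega)
    have h4 : (∏ q ∈ b, (q : ℝ)) ≠ 0 := prod_ne_zero_iff.2 fun q hq => (hq0 q (hb hq)).ne'
    have h5 : (∏ q ∈ s \ b, (q : ℝ)) ≠ 0 :=
      prod_ne_zero_iff.2 fun q hq => (hq0 q (sdiff_subset hq)).ne'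
    rw [prod_congr rfl h1]
    simp only [hy, hv, prod_div_distrib, prod_const_one, Nat.cast_prod]
    rw [h2]
    field_simp
    simp only [hWb]
  have hμ : (1 / 2 : ℝ) ^ (4 * m) ≤ (∏ q ∈ b₀, y q) * ∏ q ∈ s \ b₀, (1 - x q - y q) := by
    have h1 : ((1 / Q : ℝ)) ^ 2 = (∏ q ∈ b₀, (1 / q : ℝ) ^ 2) * ∏ q ∈ s \ b₀, (1 / q : ℝ) ^ 2 := by
      rw [mul_comm, prod_sdiff hb₀, prod_pow, hQ]
      push_cast
      rw [prod_div_distrib, prod_const_one]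
    have h2 : (1 / 2 : ℝ) ^ (4 * m) ≤ (1 / Q) ^ 2 := by
      have h3 : (Q : ℝ) ≤ 2 ^ (2 * m) := by exact_mod_cast h.prod_s_le
      rw [show 4 * m = (2 * m) * 2 by ring, pow_mul, one_div_pow 2 (2 * m)]
      gcongr
    refine h2.trans (h1.le.trans ?_)
    refine mul_le_mul ?_ ?_ (prod_nonneg fun q _ => by positivity)
      (prod_nonneg fun q _ => by simp only [hy]; positivity)
    · refine prod_le_prod (fun q _ => by positivity) fun q hq => ?_
      have : (1 : ℝ) ≤ q := by exact_mod_cast (h.prime_s q (hb₀ hq)).one_lt.le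
      refine pow_le_of_le_one (by positivity) ?_ (by norm_num)
      rw [div_le_one (by linarith)]
      exact this
    · exact prod_le_prod (fun q _ => by positivity) fun q hq => hslack q (sdiff_subset hq)
  rw [hsumS, hsumW] at hcoup
  have hfin : (#S : ℝ) / M + #W / M ≤ 1 := by
    have h1 : (1 / 2 : ℝ) ^ (4 * m) * (1 / 2) ^ (60 * m + 1) ≤
        ((∏ q ∈ b₀, y q) * ∏ q ∈ s \ b₀, (1 - x q - y q)) * ((1 / 2) ^ (60 * m + 1) + eta m) := by
      refine mul_le_mul hμ (by linarith) (by positivity) (le_trans (by positivity) hμ)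
    linarith
  rw [← add_div, div_le_one hM0] at hfin
  have : #S + #W ≤ M := by exact_mod_cast hfin
  omega

/-- The matching theorem for the non-tight part: `X` is to be its set of divisors and `supp` the
set of prime factors. -/
theorem exists_matching (h : Config m s L e) (hsupp : ∀ x ∈ X, supp x ⊆ s ∪ L)
    (hcount : ∀ A ⊆ s ∪ L, #{x ∈ X | supp x = A} = ∏ q ∈ A, e q) (c : ℕ → ℕ) :
    ∃ f : ℕ → ℕ, Set.BijOn f X (range #X) ∧ ∀ x ∈ X, Disjoint (supp x) (hits c (s ∪ L) (f x)) := by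
  have hX := h.card_X hsupp hcount
  obtain ⟨f, hf, hft⟩ := (Finset.all_card_le_biUnion_card_iff_exists_injective
    (fun i : range #X => {x ∈ X | Disjoint (supp x) (hits c (s ∪ L) i)})).1 (by
      intro W
      have := h.hall hsupp hcount c (W := W.map (Function.Embedding.subtype _)) (by
        intro i hi
        obtain ⟨j, _, rfl⟩ := mem_map.1 hi
        rw [← hX]
        exact j.2)
      rw [card_map] at this
      refine this.trans (card_le_card ?_)
      intro x hx
      obtain ⟨hxX, i, hi, hd⟩ := mem_filter.1 hx
      obtain ⟨j, hj, rfl⟩ := mem_map.1 hi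
      exact mem_biUnion.2 ⟨j, hj, mem_filter.2 ⟨hxX, hd⟩⟩)
  have hfX : ∀ i, f i ∈ X := fun i => (mem_filter.1 (hft i)).1
  have hsurj : ∀ x ∈ X, ∃ i : ℕ, ∃ hi : i ∈ range #X, f ⟨i, hi⟩ = x := by
    have : univ.image f = X := eq_of_subset_of_card_le
      (fun x hx => by obtain ⟨i, _, rfl⟩ := mem_image.1 hx; exact hfX i)
      (by rw [card_image_of_injective _ hf]; simp)
    intro x hx
    rw [← this] at hx
    obtain ⟨i, _, hi⟩ := mem_image.1 hx
    exact ⟨i, i.2, hi⟩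
  choose! g hg hfg using hsurj
  refine ⟨g, ⟨fun x hx => hg x hx, ?_, ?_⟩, ?_⟩
  · intro x hx y hy hxy
    have h1 := hfg x hx
    have h2 := hfg y hy
    rw [← h1, ← h2]
    congr 1
    exact Subtype.ext hxy
  · intro i hi
    refine ⟨f ⟨i, hi⟩, hfX _, ?_⟩
    exact congrArg Subtype.val (hf (hfg _ (hfX ⟨i, hi⟩)))
  · intro x hx
    have h1 := (mem_filter.1 (hft ⟨g x, hg x hx⟩)).2
    rwa [hfg x hx] at h1

end Config

/-! ### Divisors with a given set of prime factors -/

theorem factorization_prod_primes_pow {A : Finset ℕ} (hA : ∀ q ∈ A, q.Prime) (g : ℕ → ℕ) (p : ℕ) :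
    (∏ q ∈ A, q ^ g q).factorization p = if p ∈ A then g p else 0 := by
  rw [Nat.factorization_prod fun q hq => pow_ne_zero _ (hA q hq).ne_zero, Finsupp.finsetSum_apply]
  have : ∀ q ∈ A, (q ^ g q).factorization p = if q = p then g q else 0 := by
    intro q hq
    rw [(hA q hq).factorization_pow, Finsupp.single_apply]
  rw [sum_congr rfl this, sum_ite_eq']

theorem card_divisors_primeFactors_eq {R : ℕ} (hR : R ≠ 0) {A : Finset ℕ}
    (hA : A ⊆ R.primeFactors) :
    #{d ∈ R.divisors | d.primeFactors = A} = ∏ q ∈ A, R.factorization q := by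
  have hAp : ∀ q ∈ A, q.Prime := fun q hq => Nat.prime_of_mem_primeFactors (hA hq)
  have hcard : #(A.pi fun q => Icc 1 (R.factorization q)) = ∏ q ∈ A, R.factorization q := by
    rw [card_pi]
    exact prod_congr rfl fun q _ => by simp
  rw [← hcard]
  refine card_bij (fun d _ q _ => d.factorization q) ?_ ?_ ?_
  · intro d hd
    obtain ⟨hd1, hd2⟩ := mem_filter.1 hd
    have hd0 := (Nat.pos_of_mem_divisors hd1).ne'
    refine mem_pi.2 fun q hq => mem_Icc.2 ⟨?_, ?_⟩
    · rw [← hd2] at hq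
      exact (Nat.prime_of_mem_primeFactors hq).factorization_pos_of_dvd hd0
        (Nat.dvd_of_mem_primeFactors hq)
    · exact (Nat.factorization_le_iff_dvd hd0 hR).2 (Nat.dvd_of_mem_divisors hd1) q
  · intro d hd d' hd' h
    obtain ⟨hd1, hd2⟩ := mem_filter.1 hd
    obtain ⟨hd1', hd2'⟩ := mem_filter.1 hd'
    refine Nat.eq_of_factorization_eq (Nat.pos_of_mem_divisors hd1).ne'
      (Nat.pos_of_mem_divisors hd1').ne' fun q => ?_
    by_cases hq : q ∈ A
    · exact congrFun (congrFun h q) hq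
    · rw [Finsupp.notMem_support_iff.1 (by rw [Nat.support_factorization, hd2]; exact hq),
        Finsupp.notMem_support_iff.1 (by rw [Nat.support_factorization, hd2']; exact hq)]
  · intro g hg
    set g' : ℕ → ℕ := fun q => if hq : q ∈ A then g q hq else 0 with hg'
    have hgq : ∀ q (hq : q ∈ A), g' q = g q hq := fun q hq => by simp [hg', hq]
    have hfac := factorization_prod_primes_pow hAp g'
    have h0 : ∏ q ∈ A, q ^ g' q ≠ 0 := prod_ne_zero_iff.2 fun q hq => pow_ne_zero _ (hAp q hq).ne_zero
    refine ⟨∏ q ∈ A, q ^ g' q, mem_filter.2 ⟨Nat.mem_divisors.2 ⟨?_, hR⟩, ?_⟩, ?_⟩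
    · refine (Nat.factorization_le_iff_dvd h0 hR).1 fun q => ?_
      rw [hfac]
      split_ifs with hq
      · rw [hgq q hq]
        exact (mem_Icc.1 (mem_pi.1 hg q hq)).2
      · exact Nat.zero_le _
    · ext q
      rw [← Nat.support_factorization, Finsupp.mem_support_iff, hfac]
      by_cases hq : q ∈ A
      · have := (mem_Icc.1 (mem_pi.1 hg q hq)).1
        simp only [hq, if_true, iff_true, hgq q hq]
        omega
      · simp [hq]
    · funext q hq
      simp only [hfac, hq, if_true, hgq q hq]

/-! ### Prime number estimates -/

theorem oddPrime_le {j m : ℕ} (hj : 0 < j) (h : j < Nat.primeCounting m) : oddPrime j ≤ m := by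
  refine Nat.lt_succ_iff.1 (Nat.nth_lt_of_lt_count ?_)
  have h1 : Nat.primeCounting m ≤ Nat.count (fun p => p.Prime ∧ p ≠ 2) (m + 1) + 1 := by
    rw [Nat.primeCounting, Nat.primeCounting', Nat.count_eq_card_filter_range,
      Nat.count_eq_card_filter_range]
    refine le_trans (card_le_card ?_) (card_insert_le 2 _)
    intro p hp
    simp only [mem_filter, mem_insert] at hp ⊢
    tauto
  rw [Nat.succ_eq_add_one]
  omega

/-- With `x = m ^ (1 / 4)`, Chebyshev gives `π(m) ≥ x ^ 3 / 16`, while `√l ≤ 11 x ^ 2`. -/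
theorem sqrt_lt_primeCounting {l m : ℕ} (hm : 2 ^ 100 ≤ m) (hl : l < 100 * m + 100) :
    Nat.sqrt l < Nat.primeCounting m := by
  set x : ℝ := √(√m) with hx
  have hx0 : 0 ≤ x := Real.sqrt_nonneg _
  have hx2 : x ^ 2 = √m := Real.sq_sqrt (Real.sqrt_nonneg _)
  have hx4 : x ^ 4 = m := by
    rw [show x ^ 4 = (x ^ 2) ^ 2 by ring, hx2, Real.sq_sqrt (Nat.cast_nonneg _)]
  have hmR : (2 : ℝ) ^ 100 ≤ m := by exact_mod_cast hm
  have hx25 : (2 : ℝ) ^ 25 ≤ x := by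
    refine le_of_pow_le_pow_left₀ (n := 4) (by norm_num) hx0 ?_
    rw [hx4, ← pow_mul]
    exact hmR
  have hx1 : 0 < x := lt_of_lt_of_le (by positivity) hx25
  have hlog : Real.log m ≤ 4 * x := by
    rw [← hx4, Real.log_pow]
    have := Real.log_le_self hx0
    push_cast
    linarith
  have hlogpos : 0 < Real.log m := Real.log_pos (by linarith)
  have hlog1 : Real.log (m + 1) ≤ 4 * x + 1 := by
    have h1 : Real.log (m + 1) ≤ Real.log (m * Real.exp 1) := by
      refine Real.log_le_log (by positivity) ?_
      have := Real.add_one_le_exp 1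
      nlinarith
    rw [Real.log_mul (by positivity) (by positivity), Real.log_exp] at h1
    linarith
  have hpi := Chebyshev.pi_ge m
  rw [div_le_iff₀ hlogpos] at hpi
  have hlog2 := Real.log_two_gt_d9
  have hpi2 : x ^ 4 / 4 ≤ Nat.primeCounting m * (4 * x) := by
    have h1 : (Nat.primeCounting m : ℝ) * Real.log m ≤ Nat.primeCounting m * (4 * x) := by gcongr
    have h2 : x ^ 4 * (1 / 2) ≤ m * Real.log 2 := by
      rw [hx4]; gcongr; linarith
    have h3 : 4 * x + 1 ≤ x ^ 4 / 4 := by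
      have h5 : (2 : ℝ) ^ 25 * x ≤ x ^ 2 := by nlinarith
      have h6 : (2 : ℝ) ^ 25 * x ^ 2 ≤ x ^ 4 := by nlinarith [pow_nonneg hx0 2]
      norm_num at h5 h6 hx25
      linarith
    linarith
  have hpi3 : x ^ 3 / 16 ≤ Nat.primeCounting m := by
    refine le_of_mul_le_mul_right ?_ (by linarith : 0 < 4 * x)
    linarith [show x ^ 3 / 16 * (4 * x) = x ^ 4 / 4 by ring]
  have hsq : (Nat.sqrt l : ℝ) ≤ 11 * x ^ 2 := by
    have h1 : ((Nat.sqrt l : ℝ)) ^ 2 ≤ (11 * x ^ 2) ^ 2 := by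
      have h2 : ((Nat.sqrt l : ℝ)) ^ 2 ≤ l := by exact_mod_cast Nat.sqrt_le' l
      have h3 : (l : ℝ) ≤ 100 * m + 100 := by exact_mod_cast hl.le
      have h4 : (11 * x ^ 2) ^ 2 = 121 * m := by rw [← hx4]; ring
      have h5 : (100 : ℝ) ≤ m := by exact_mod_cast le_trans (by norm_num) hm
      rw [h4]
      linarith
    exact le_of_pow_le_pow_left₀ two_ne_zero (by positivity) h1
  have : (Nat.sqrt l : ℝ) < Nat.primeCounting m := by
    have h1 : (2 : ℝ) ^ 25 * x ^ 2 ≤ x ^ 3 := by nlinarith [pow_nonneg hx0 2]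
    have h2 : 0 < x ^ 2 := by positivity
    norm_num at h1
    linarith
  exact_mod_cast this

theorem exists_primeCounting_le : ∃ m₀ : ℕ, ∀ m ≥ m₀,
    (2 : ℝ) ^ 102 * Nat.primeCounting (2 ^ 110 * m) ≤ m := by
  have h1 := Chebyshev.eventually_primeCounting_le (ε := 1) one_pos
  have h2 := Real.tendsto_log_atTop.eventually_ge_atTop ((2 : ℝ) ^ 214)
  obtain ⟨x₀, hx₀⟩ := Filter.eventually_atTop.1 (h1.and h2)
  refine ⟨⌈x₀⌉₊ + 1, fun m hm => ?_⟩
  have hm0 : (0 : ℝ) < m := by exact_mod_cast (by omega : 0 < m)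
  have hmx : x₀ ≤ ((2 ^ 110 * m : ℕ) : ℝ) := by
    have h3 : x₀ ≤ m := (Nat.le_ceil x₀).trans (by exact_mod_cast (by omega : ⌈x₀⌉₊ ≤ m))
    push_cast
    linarith
  obtain ⟨h3, h4⟩ := hx₀ _ hmx
  rw [Nat.floor_natCast] at h3
  have hlog4 : Real.log 4 ≤ 3 := by
    have := Real.log_le_sub_one_of_pos (x := 4) (by norm_num)
    linarith
  have h5 : (Nat.primeCounting (2 ^ 110 * m) : ℝ) ≤ 4 * (2 ^ 110 * m) / 2 ^ 214 := by
    refine h3.trans ?_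
    have h6 : ((2 ^ 110 * m : ℕ) : ℝ) = 2 ^ 110 * m := by rw [Nat.cast_mul, Nat.cast_pow]; rfl
    rw [h6] at h4 ⊢
    gcongr
    linarith
  calc (2 : ℝ) ^ 102 * Nat.primeCounting (2 ^ 110 * m)
      ≤ 2 ^ 102 * (4 * (2 ^ 110 * (m : ℝ)) / 2 ^ 214) := by gcongr
    _ = (m : ℝ) := by ring

/-- Large primes up to `2 ^ 110 * m` are few by Chebyshev's bound, and each has reciprocal at most
`1 / m`; the at most `101 * m` others have reciprocals at most `1 / (2 ^ 110 * m)`. -/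
theorem recip_sum_le {m : ℕ} (hm : 2 ^ 100 ≤ m)
    (hpi : (2 : ℝ) ^ 102 * Nat.primeCounting (2 ^ 110 * m) ≤ m) {L : Finset ℕ}
    (hprime : ∀ q ∈ L, q.Prime) (hlarge : ∀ q ∈ L, m < q) (hcard : #L < 100 * m + 100) :
    (2 : ℝ) ^ 100 * ∑ q ∈ L, (1 / q : ℝ) ≤ 1 / 2 := by
  have hm0 : (0 : ℝ) < m := by exact_mod_cast (lt_of_lt_of_le (by positivity) hm)
  have hmR : (2 : ℝ) ^ 100 ≤ m := by exact_mod_cast hm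
  rw [← sum_filter_add_sum_filter_not L (fun q => q ≤ 2 ^ 110 * m)]
  have hA : ∑ q ∈ L with q ≤ 2 ^ 110 * m, (1 / q : ℝ) ≤ 1 / 2 ^ 102 := by
    have h1 : ∀ q ∈ L.filter (fun q => q ≤ 2 ^ 110 * m), (1 / q : ℝ) ≤ 1 / m := by
      intro q hq
      have : (m : ℝ) ≤ q := by exact_mod_cast (hlarge q (mem_filter.1 hq).1).le
      gcongr
    have h2 : #(L.filter fun q => q ≤ 2 ^ 110 * m) ≤ Nat.primeCounting (2 ^ 110 * m) := by
      rw [Nat.primeCounting, Nat.primeCounting', Nat.count_eq_card_filter_range]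
      refine card_le_card fun q hq => ?_
      obtain ⟨h3, h4⟩ := mem_filter.1 hq
      exact mem_filter.2 ⟨mem_range.2 (Nat.lt_succ_of_le h4), hprime q h3⟩
    have h3 : (#(L.filter fun q => q ≤ 2 ^ 110 * m) : ℝ) ≤ Nat.primeCounting (2 ^ 110 * m) := by
      exact_mod_cast h2
    have h4 := sum_le_card_nsmul _ _ _ h1
    rw [nsmul_eq_mul] at h4
    refine h4.trans ?_
    rw [mul_one_div, div_le_div_iff₀ hm0 (by positivity)]
    nlinarith
  have hB : ∑ q ∈ L with ¬ q ≤ 2 ^ 110 * m, (1 / q : ℝ) ≤ 1 / 2 ^ 102 := by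
    have h1 : ∀ q ∈ L.filter (fun q => ¬ q ≤ 2 ^ 110 * m), (1 / q : ℝ) ≤ 1 / (2 ^ 110 * m) := by
      intro q hq
      have : ((2 ^ 110 * m : ℕ) : ℝ) ≤ q := by exact_mod_cast (not_le.1 (mem_filter.1 hq).2).le
      rw [Nat.cast_mul, Nat.cast_pow, Nat.cast_ofNat] at this
      gcongr
    have h2 : (#(L.filter fun q => ¬ q ≤ 2 ^ 110 * m) : ℝ) ≤ 100 * m + 100 := by
      exact_mod_cast (card_le_card (filter_subset _ _)).trans hcard.le
    have h4 := sum_le_card_nsmul _ _ _ h1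
    rw [nsmul_eq_mul] at h4
    refine h4.trans ?_
    have h5 : (100 : ℝ) ≤ m := by exact_mod_cast le_trans (by norm_num) hm
    rw [mul_one_div, div_le_div_iff₀ (by positivity) (by positivity), one_mul]
    calc _ ≤ (101 * m : ℝ) * 2 ^ 102 := by gcongr; linarith
      _ ≤ _ := by linarith
  calc _ ≤ (2 : ℝ) ^ 100 * (1 / 2 ^ 102 + 1 / 2 ^ 102) := by gcongr
    _ = 1 / 2 := by norm_num

/-! ### Reduction to the non-tight part -/

theorem factorization_le_of_isMNumber {n : ℕ} (hn : n ≠ 0) (hM : IsMNumber n) {p : ℕ}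
    (hp : p.Prime) : n.factorization p ≤ p - 1 := by
  by_contra! h
  exact hM p hp ((hp.pow_dvd_iff_le_factorization hn).2 (by omega))

theorem nonTightPart_eq {n : ℕ} (hn : n ≠ 0) :
    nonTightPart n = ∏ p ∈ n.primeFactors with n.factorization p ≠ p - 1, p ^ n.factorization p := by
  have h1 : tightPart n =
      ∏ p ∈ n.primeFactors with n.factorization p = p - 1, p ^ n.factorization p :=
    prod_congr rfl fun p hp => by rw [(mem_filter.1 hp).2]
  have h2 : tightPart n ≠ 0 := prod_ne_zero_iff.2 fun p hp =>
    pow_ne_zero _ (Nat.prime_of_mem_primeFactors (mem_filter.1 hp).1).ne_zero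
  have h3 : tightPart n * ∏ p ∈ n.primeFactors with n.factorization p ≠ p - 1, p ^ n.factorization p
      = n := by
    rw [h1, prod_filter_mul_prod_filter_not]
    exact Nat.prod_factorization_pow_eq_self hn
  refine Nat.div_eq_of_eq_mul_right (Nat.pos_of_ne_zero h2) h3.symm

theorem nonTightPart_ne_zero {n : ℕ} (hn : n ≠ 0) : nonTightPart n ≠ 0 := by
  rw [nonTightPart_eq hn]
  exact prod_ne_zero_iff.2 fun p hp =>
    pow_ne_zero _ (Nat.prime_of_mem_primeFactors (mem_filter.1 hp).1).ne_zero

theorem factorization_nonTightPart {n : ℕ} (hn : n ≠ 0) (p : ℕ) :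
    (nonTightPart n).factorization p =
      if p ∈ n.primeFactors ∧ n.factorization p ≠ p - 1 then n.factorization p else 0 := by
  rw [nonTightPart_eq hn, factorization_prod_primes_pow
    fun p hp => Nat.prime_of_mem_primeFactors (mem_filter.1 hp).1]
  simp only [mem_filter]

theorem primeFactors_nonTightPart {n : ℕ} (hn : n ≠ 0) :
    (nonTightPart n).primeFactors = {p ∈ n.primeFactors | n.factorization p ≠ p - 1} := by
  ext p
  rw [← Nat.support_factorization, Finsupp.mem_support_iff, factorization_nonTightPart hn, mem_filter]
  constructor
  · intro h
    by_contra h'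
    rw [if_neg h'] at h
    exact h rfl
  · intro h
    rw [if_pos h, ← Finsupp.mem_support_iff, Nat.support_factorization]
    exact h.1

theorem card_divisors_eq {n : ℕ} (hn : n ≠ 0) :
    #n.divisors = (∏ p ∈ n.primeFactors with n.factorization p = p - 1, p) *
      #(nonTightPart n).divisors := by
  rw [Nat.card_divisors hn, Nat.card_divisors (nonTightPart_ne_zero hn),
    primeFactors_nonTightPart hn,
    ← prod_filter_mul_prod_filter_not n.primeFactors (fun p => n.factorization p = p - 1)]
  congr 1
  · refine prod_congr rfl fun p hp => ?_
    obtain ⟨h1, h2⟩ := mem_filter.1 hp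
    have := (Nat.prime_of_mem_primeFactors h1).pos
    omega
  · refine prod_congr rfl fun p hp => ?_
    rw [factorization_nonTightPart hn, if_pos (mem_filter.1 hp)]

/-- As `P` is invertible modulo `q`, divisibility of `r + P * i` by `q` confines `i` to a single
residue class modulo `q`. -/
theorem exists_residues {P r : ℕ} {S : Finset ℕ} (hS : ∀ q ∈ S, q.Coprime P) :
    ∃ c : ℕ → ℕ, ∀ q ∈ S, ∀ i, q ∣ r + P * i → i ≡ c q [MOD q] := by
  have : ∀ q ∈ S, ∃ c, ∀ i, q ∣ r + P * i → i ≡ c [MOD q] := by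
    intro q hq
    by_cases h : ∃ i, q ∣ r + P * i
    · obtain ⟨i₀, h₀⟩ := h
      refine ⟨i₀, fun i hi => ?_⟩
      have h1 : r + P * i ≡ r + P * i₀ [MOD q] :=
        (Nat.modEq_zero_iff_dvd.2 hi).trans (Nat.modEq_zero_iff_dvd.2 h₀).symm
      exact Nat.ModEq.cancel_left_of_coprime (hS q hq) (Nat.ModEq.add_left_cancel' r h1)
    · exact ⟨0, fun i hi => (h ⟨i, hi⟩).elim⟩
  choose! c hc using this
  exact ⟨c, hc⟩

/-- The Chinese remainder theorem with representative in `[1, ∏ p]` rather than `[0, ∏ p)`. -/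
theorem exists_crt {T : Finset ℕ} (hT : ∀ p ∈ T, p.Prime) (v : ℕ → ℕ) :
    ∃ r, 1 ≤ r ∧ r ≤ ∏ p ∈ T, p ∧ ∀ p ∈ T, r ≡ v p [MOD p] := by
  have hP : 0 < ∏ p ∈ T, p := prod_pos fun p hp => (hT p hp).pos
  obtain ⟨k, hk⟩ := Nat.chineseRemainderOfFinset v id T (fun p hp => (hT p hp).ne_zero)
    (fun p hp q hq hpq => (Nat.coprime_primes (hT p hp) (hT q hq)).2 hpq)
  rcases Nat.eq_zero_or_pos (k % ∏ p ∈ T, p) with h0 | h0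
  · refine ⟨∏ p ∈ T, p, hP, le_rfl, fun p hp => ?_⟩
    refine Nat.ModEq.trans ?_ (hk p hp)
    have h1 : p ∣ ∏ p ∈ T, p := dvd_prod_of_mem _ hp
    exact (Nat.modEq_zero_iff_dvd.2 h1).trans
      (Nat.modEq_zero_iff_dvd.2 (h1.trans (Nat.dvd_of_mod_eq_zero h0))).symm
  · refine ⟨_, h0, (Nat.mod_lt _ hP).le, fun p hp => ?_⟩
    exact ((Nat.mod_modEq k _).of_dvd (dvd_prod_of_mem _ hp)).trans (hk p hp)

/-- It suffices to match, for all choices of residues, the divisors of the non-tight part. The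
bijection is `d ↦ r + P * f (gcd d R)`, where `P` is the product of the tight primes, `r ∈ [1, P]`
is congruent to `v_p(d)` modulo each tight `p`, and `f` is the matching for the residues attached to
`r`. -/
theorem matchable_of_forall_residues {n : ℕ} (hn : n ≠ 0)
    (hmatch : ∀ c : ℕ → ℕ, ∃ f : ℕ → ℕ,
      Set.BijOn f (nonTightPart n).divisors (range #(nonTightPart n).divisors) ∧
      ∀ x ∈ (nonTightPart n).divisors,
        Disjoint x.primeFactors (hits c (nonTightPart n).primeFactors (f x))) :
    Matchable n := by
  set R := nonTightPart n with hR
  have hR0 : R ≠ 0 := nonTightPart_ne_zero hn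
  set T := {p ∈ n.primeFactors | n.factorization p = p - 1} with hTdef
  set P := ∏ p ∈ T, p with hP
  have hTp : ∀ p ∈ T, p.Prime := fun p hp => Nat.prime_of_mem_primeFactors (mem_filter.1 hp).1
  have hRp : R.primeFactors = {p ∈ n.primeFactors | n.factorization p ≠ p - 1} :=
    primeFactors_nonTightPart hn
  have hτ : #n.divisors = P * #R.divisors := card_divisors_eq hn
  have hcop : ∀ q ∈ R.primeFactors, q.Coprime P := by
    intro q hq
    have hq' := hq
    rw [hRp, mem_filter] at hq'
    refine Nat.Coprime.prod_right fun p hp => ?_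
    refine (Nat.coprime_primes (Nat.prime_of_mem_primeFactors hq) (hTp p hp)).2 ?_
    rintro rfl
    exact hq'.2 (mem_filter.1 hp).2
  have hρ : ∀ d : ℕ, ∃ r, 1 ≤ r ∧ r ≤ P ∧ ∀ p ∈ T, r ≡ d.factorization p [MOD p] :=
    fun d => exists_crt hTp _
  choose ρ hρ1 hρP hρT using hρ
  have hF : ∀ r : ℕ, ∃ f : ℕ → ℕ, Set.BijOn f R.divisors (range #R.divisors) ∧
      ∀ x ∈ R.divisors, ∀ q ∈ x.primeFactors, ¬ q ∣ r + P * f x := by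
    intro r
    obtain ⟨c, hc⟩ := exists_residues (r := r) hcop
    obtain ⟨f, hf, hd⟩ := hmatch c
    refine ⟨f, hf, fun x hx q hq hdvd => ?_⟩
    have hqR : q ∈ R.primeFactors :=
      Nat.primeFactors_mono (Nat.dvd_of_mem_divisors hx) hR0 hq
    exact Finset.disjoint_left.1 (hd x hx) hq (mem_filter.2 ⟨hqR, hc q hqR _ hdvd⟩)
  choose F hFbij hFdvd using hF
  have hgR : ∀ d, Nat.gcd d R ∈ R.divisors := fun d => Nat.mem_divisors.2 ⟨Nat.gcd_dvd_right _ _, hR0⟩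
  have hFlt : ∀ d, F (ρ d) (Nat.gcd d R) < #R.divisors := fun d =>
    mem_range.1 ((hFbij (ρ d)).mapsTo (hgR d))
  -- The valuation of a divisor at a prime of `R` is read off from its gcd with `R`.
  have hval : ∀ d ∈ n.divisors, ∀ q ∈ R.primeFactors,
      (Nat.gcd d R).factorization q = d.factorization q := by
    intro d hd q hq
    have hd0 := (Nat.pos_of_mem_divisors hd).ne'
    rw [Nat.factorization_gcd hd0 hR0, Finsupp.inf_apply, factorization_nonTightPart hn,
      if_pos (by rw [hRp, mem_filter] at hq; exact hq)]
    exact inf_eq_left.2 ((Nat.factorization_le_iff_dvd hd0 hn).2 (Nat.dvd_of_mem_divisors hd) q)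
  have hmaps : Set.MapsTo (fun d => ρ d + P * F (ρ d) (Nat.gcd d R)) n.divisors
      (Icc 1 #n.divisors) := by
    intro d _
    rw [mem_coe, mem_Icc]
    refine ⟨le_add_right (hρ1 d), ?_⟩
    calc ρ d + P * F (ρ d) (Nat.gcd d R) ≤ P + P * F (ρ d) (Nat.gcd d R) :=
          Nat.add_le_add_right (hρP d) _
      _ = P * (F (ρ d) (Nat.gcd d R) + 1) := by ring
      _ ≤ P * #R.divisors := Nat.mul_le_mul_left _ (hFlt d)
      _ = #n.divisors := hτ.symm
  have hinj : Set.InjOn (fun d => ρ d + P * F (ρ d) (Nat.gcd d R)) n.divisors := by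
    intro d hd d' hd' h
    simp only at h
    have hP0 : 0 < P := prod_pos fun p hp => (hTp p hp).pos
    -- Uniqueness of division with remainder, the remainders lying in `[1, P]`.
    have hq : F (ρ d) (Nat.gcd d R) = F (ρ d') (Nat.gcd d' R) := by
      have h1 := hρ1 d
      have h2 := hρP d
      have h3 := hρ1 d'
      have h4 := hρP d'
      rcases lt_trichotomy (F (ρ d) (Nat.gcd d R)) (F (ρ d') (Nat.gcd d' R)) with h5 | h5 | h5
      · have := Nat.mul_le_mul_left P (Nat.succ_le_of_lt h5)
        rw [Nat.mul_succ] at this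
        omega
      · exact h5
      · have := Nat.mul_le_mul_left P (Nat.succ_le_of_lt h5)
        rw [Nat.mul_succ] at this
        omega
    have hr : ρ d = ρ d' := by rw [hq] at h; omega
    rw [← hr] at hq
    have hg : Nat.gcd d R = Nat.gcd d' R := (hFbij (ρ d)).injOn (hgR d) (hgR d') hq
    have hd0 := (Nat.pos_of_mem_divisors hd).ne'
    have hd0' := (Nat.pos_of_mem_divisors hd').ne'
    have hle := (Nat.factorization_le_iff_dvd hd0 hn).2 (Nat.dvd_of_mem_divisors hd)
    have hle' := (Nat.factorization_le_iff_dvd hd0' hn).2 (Nat.dvd_of_mem_divisors hd')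
    refine Nat.eq_of_factorization_eq hd0 hd0' fun p => ?_
    by_cases hpn : p ∈ n.primeFactors
    · by_cases hpT : n.factorization p = p - 1
      · have hpT' : p ∈ T := mem_filter.2 ⟨hpn, hpT⟩
        have hp := (hTp p hpT').pos
        have h1 := hle p
        have h2 := hle' p
        refine Nat.ModEq.eq_of_lt_of_lt (m := p) ?_ (by omega) (by omega)
        exact (hρT d p hpT').symm.trans (hr ▸ hρT d' p hpT')
      · have hpR : p ∈ R.primeFactors := by rw [hRp]; exact mem_filter.2 ⟨hpn, hpT⟩
        rw [← hval d hd p hpR, ← hval d' hd' p hpR, hg]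
    · have h0 : n.factorization p = 0 :=
        Finsupp.notMem_support_iff.1 (by rwa [Nat.support_factorization])
      have h1 := hle p
      have h2 := hle' p
      omega
  refine ⟨fun d => ρ d + P * F (ρ d) (Nat.gcd d R), ⟨hmaps, hinj, ?_⟩, ?_⟩
  · exact Finset.surjOn_of_injOn_of_card_le _ hmaps hinj (by simp)
  · intro d hd
    refine Nat.coprime_of_dvd fun p hp hpd hpψ => ?_
    have hd0 := (Nat.pos_of_mem_divisors hd).ne'
    have hdn := Nat.dvd_of_mem_divisors hd
    have hpn : p ∈ n.primeFactors := Nat.mem_primeFactors.2 ⟨hp, hpd.trans hdn, hn⟩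
    have hpos := hp.factorization_pos_of_dvd hd0 hpd
    by_cases hpT : n.factorization p = p - 1
    · have hpT' : p ∈ T := mem_filter.2 ⟨hpn, hpT⟩
      have h1 : p ∣ ρ d :=
        (Nat.dvd_add_left (Dvd.dvd.mul_right (dvd_prod_of_mem _ hpT') _)).1 hpψ
      have h2 : p ∣ d.factorization p :=
        Nat.modEq_zero_iff_dvd.1 ((hρT d p hpT').symm.trans (Nat.modEq_zero_iff_dvd.2 h1))
      have h3 := Nat.le_of_dvd hpos h2
      have h4 := (Nat.factorization_le_iff_dvd hd0 hn).2 hdn p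
      have := hp.pos
      omega
    · have hpR : p ∈ R.primeFactors := by rw [hRp]; exact mem_filter.2 ⟨hpn, hpT⟩
      refine hFdvd (ρ d) _ (hgR d) p ?_ hpψ
      exact Nat.mem_primeFactors.2 ⟨hp, Nat.dvd_gcd hpd (Nat.dvd_of_mem_primeFactors hpR),
        (Nat.pos_of_mem_divisors (hgR d)).ne.symm⟩

/-! ### The threshold and the configuration attached to `n` -/

theorem matchable_of_large {n m : ℕ} (hn : n ≠ 0) (hM : IsMNumber n)
    (hmdef : m = #(nonTightPart n).primeFactors / 100) (hm : 2 ^ 100 ≤ m)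
    (hpi : (2 : ℝ) ^ 102 * Nat.primeCounting (2 ^ 110 * m) ≤ m)
    (hsq : ∀ q : ℕ, q.Prime → q ∣ n → n.factorization q ≠ q - 1 →
      oddPrime (Nat.sqrt #(nonTightPart n).primeFactors) < q → ¬ q ^ 2 ∣ n) :
    Matchable n := by
  set R := nonTightPart n with hR
  set l := #R.primeFactors with hl
  have hR0 : R ≠ 0 := nonTightPart_ne_zero hn
  have hodd : oddPrime (Nat.sqrt l) ≤ m :=
    oddPrime_le (Nat.sqrt_pos.2 (by omega)) (sqrt_lt_primeCounting hm (by omega))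
  have hprime : ∀ q ∈ R.primeFactors, q.Prime := fun q hq => Nat.prime_of_mem_primeFactors hq
  have hmem : ∀ q ∈ R.primeFactors, q ∈ n.primeFactors ∧ n.factorization q ≠ q - 1 := by
    intro q hq
    rw [hR, primeFactors_nonTightPart hn] at hq
    exact mem_filter.1 hq
  have hfac : ∀ q ∈ R.primeFactors, R.factorization q = n.factorization q := by
    intro q hq
    rw [hR, factorization_nonTightPart hn, if_pos (hmem q hq)]
  have hpos : ∀ q ∈ R.primeFactors, 1 ≤ R.factorization q := fun q hq =>
    (hprime q hq).factorization_pos_of_dvd hR0 (Nat.dvd_of_mem_primeFactors hq)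
  have hcard : #{q ∈ R.primeFactors | q ≤ m} + #{q ∈ R.primeFactors | ¬ q ≤ m} = l :=
    card_filter_add_card_filter_not _
  have hunion : {q ∈ R.primeFactors | q ≤ m} ∪ {q ∈ R.primeFactors | ¬ q ≤ m} = R.primeFactors :=
    filter_union_filter_not_eq _ _
  have hcfg : Config m {q ∈ R.primeFactors | q ≤ m} {q ∈ R.primeFactors | ¬ q ≤ m}
      R.factorization := by
    refine ⟨?_, ?_, ?_, ?_, ?_, ?_, ?_, ?_, ?_, hm, ?_⟩
    · exact fun q hq => hprime q (mem_filter.1 hq).1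
    · exact fun q hq => hprime q (mem_filter.1 hq).1
    · exact fun q hq => (mem_filter.1 hq).2
    · exact fun q hq => not_le.1 (mem_filter.1 hq).2
    · exact fun q hq => hpos q (mem_filter.1 hq).1
    · intro q hq
      have hqR := (mem_filter.1 hq).1
      have h1 := factorization_le_of_isMNumber hn hM (hprime q hqR)
      have h2 := (hmem q hqR).2
      have h3 := hpos q hqR
      rw [hfac q hqR] at h3 ⊢
      omega
    · intro q hq
      obtain ⟨hqR, hqm⟩ := mem_filter.1 hq
      have h1 := hsq q (hprime q hqR) (Nat.dvd_of_mem_primeFactors (hmem q hqR).1) (hmem q hqR).2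
        (by omega)
      rw [(hprime q hqR).pow_dvd_iff_le_factorization hn, ← hfac q hqR] at h1
      have h2 := hpos q hqR
      omega
    · omega
    · omega
    · refine recip_sum_le hm hpi (fun q hq => hprime q (mem_filter.1 hq).1)
        (fun q hq => not_le.1 (mem_filter.1 hq).2) ?_
      omega
  refine matchable_of_forall_residues hn fun c => ?_
  have h := hcfg.exists_matching (X := R.divisors) (supp := Nat.primeFactors)
    (fun x hx => by
      rw [hunion]
      exact Nat.primeFactors_mono (Nat.dvd_of_mem_divisors hx) hR0)
    (fun A hA => card_divisors_primeFactors_eq hR0 (by rwa [hunion] at hA)) c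
  rwa [hunion] at h

end DivisorMatching

theorem stmt_11 :
    ∃ N : ℕ, ∀ n : ℕ, 0 < n → IsMNumber n →
      N ≤ (nonTightPart n).primeFactors.card →
      (∀ q : ℕ, q.Prime → q ∣ n → n.factorization q ≠ q - 1 →
        oddPrime (Nat.sqrt ((nonTightPart n).primeFactors.card)) < q →
        ¬ q ^ 2 ∣ n) →
      Matchable n := by
  obtain ⟨m₀, hm₀⟩ := DivisorMatching.exists_primeCounting_le
  refine ⟨100 * max m₀ (2 ^ 100), fun n hn hM hN hsq => ?_⟩
  have hm : max m₀ (2 ^ 100) ≤ (nonTightPart n).primeFactors.card / 100 := by omega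
  exact DivisorMatching.matchable_of_large hn.ne' hM rfl ((le_max_right _ _).trans hm)
    (hm₀ _ ((le_max_left _ _).trans hm)) hsq
end

section
/- The set of M-numbers that are not matchable has asymptotic density 0, i.e., #{n ≤ x : n is an M-number and n is not matchable}/x → 0 as x → ∞. -/
/-! ### Hall's theorem on a finite set -/

/-- Hall's marriage theorem for a finite set of indices. -/
lemma hall_on {α β : Type*} [DecidableEq α] [DecidableEq β] (J : Finset α) (t : α → Finset β)
    (b₀ : β) (h : ∀ A ⊆ J, A.card ≤ (A.biUnion t).card) :
    ∃ f : α → β, Set.InjOn f J ∧ ∀ j ∈ J, f j ∈ t j := by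
  have key := (Finset.all_card_le_biUnion_card_iff_exists_injective
    (fun x : {x // x ∈ J} => t x.1)).1 ?_
  · obtain ⟨f, hf, hft⟩ := key
    refine ⟨fun a => if ha : a ∈ J then f ⟨a, ha⟩ else b₀, ?_, ?_⟩
    · intro x hx y hy hxy
      have hx' : x ∈ J := hx
      have hy' : y ∈ J := hy
      simp only [hx', hy', dif_pos] at hxy
      exact congrArg Subtype.val (hf hxy)
    · intro j hj
      simp only [hj, dif_pos]
      exact hft ⟨j, hj⟩
  · intro s
    have := h (s.map (Function.Embedding.subtype _)) (by
      intro x hx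
      simp only [Finset.mem_map, Function.Embedding.coe_subtype] at hx
      obtain ⟨a, -, rfl⟩ := hx
      exact a.2)
    rw [Finset.card_map] at this
    refine this.trans (Finset.card_le_card ?_)
    intro b hb
    simp only [Finset.mem_biUnion, Finset.mem_map] at hb ⊢
    obtain ⟨a, ⟨c, hc, rfl⟩, hb⟩ := hb
    exact ⟨c, hc, hb⟩

/-! ### Tight and slack parts of an M-number -/

/-- A number `m` is tight if `τ(m) ∣ m` and every integer `x` can be sent to a divisor `ρ x` of `m`
coprime to `x` in such a way that `ρ x` determines `x` modulo `τ(m)`. Each divisor is then used by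
at most one residue class modulo `τ(m)`. The basic example is `m = p ^ (p - 1)`, with
`ρ x = p ^ (x % p)`. -/
def TightMap (m : ℕ) : Prop :=
  m.divisors.card ∣ m ∧ ∃ ρ : ℕ → ℕ, (∀ x, ρ x ∈ m.divisors) ∧ (∀ x, Nat.Coprime x (ρ x)) ∧
    ∀ x y, ρ x = ρ y → x ≡ y [MOD m.divisors.card]

/-- A fractional matching, periodic modulo `m`, between the integers and the divisors of `m`: the
weight `W x e` lives on coprime pairs, each integer `x` has total weight `1`, and over one period
each divisor receives the same total weight `m / τ(m)`. Positivity at all `x` coprime to `m` says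
that integers not coprime to `m` use strictly less than the capacity of each divisor. -/
structure IsCoupling (m : ℕ) (W : ℕ → ℕ → ℝ) : Prop where
  nonneg : ∀ x e, 0 ≤ W x e
  periodic : ∀ x y e, x ≡ y [MOD m] → W x e = W y e
  row : ∀ x, ∑ e ∈ m.divisors, W x e = 1
  supp : ∀ x, ∀ e ∈ m.divisors, W x e ≠ 0 → Nat.Coprime x e
  col : ∀ e ∈ m.divisors, ∑ x ∈ Finset.range m, W x e = (m : ℝ) / m.divisors.card
  pos : ∀ x, ∀ e ∈ m.divisors, Nat.Coprime x m → 0 < W x e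

lemma tightMap_one : TightMap 1 := by
  refine ⟨by simp, fun _ => 1, by simp, by simp, ?_⟩
  intro x y _
  simp [Nat.modEq_one]

lemma isCoupling_one : IsCoupling 1 (fun _ _ => 1) := by
  constructor <;> simp

lemma tightMap_prime_pow {p : ℕ} (hp : p.Prime) : TightMap (p ^ (p - 1)) := by
  have hc : (p ^ (p - 1)).divisors.card = p := by
    rw [Nat.divisors_prime_pow hp]
    simp
    have := hp.two_le
    omega
  have h2 := hp.two_le
  refine ⟨?_, fun x => p ^ (x % p), ?_, ?_, ?_⟩
  · rw [hc]; exact dvd_pow_self p (by omega)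
  · intro x
    rw [Nat.mem_divisors]
    exact ⟨pow_dvd_pow p (by have := Nat.mod_lt x hp.pos; omega), pow_ne_zero _ hp.ne_zero⟩
  · intro x
    by_cases h : p ∣ x
    · simp [Nat.mod_eq_zero_of_dvd h]
    · exact Nat.Coprime.pow_right _ ((hp.coprime_iff_not_dvd.2 h).symm)
  · intro x y h
    rw [hc]
    exact Nat.pow_right_injective h2 h

/-- Factors of a product along coprime `a`, `b` are determined by the product. -/
lemma coprime_mul_inj {a b d d' e e' : ℕ} (hab : a.Coprime b) (hd : d ∣ a) (hd' : d' ∣ a)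
    (he : e ∣ b) (he' : e' ∣ b) (h : d * e = d' * e') : d = d' ∧ e = e' := by
  have h1 : d = d' := by
    apply Nat.dvd_antisymm
    · have : d.Coprime e' := Nat.Coprime.of_dvd hd he' hab
      exact this.dvd_of_dvd_mul_right (h ▸ dvd_mul_right d e)
    · have : d'.Coprime e := Nat.Coprime.of_dvd hd' he hab
      exact this.dvd_of_dvd_mul_right (h ▸ dvd_mul_right d' e')
  have h2 : e = e' := by
    apply Nat.dvd_antisymm
    · have : e.Coprime d' := (Nat.Coprime.of_dvd hd' he hab).symm
      exact this.dvd_of_dvd_mul_left (h ▸ dvd_mul_left e d)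
    · have : e'.Coprime d := (Nat.Coprime.of_dvd hd he' hab).symm
      exact this.dvd_of_dvd_mul_left (h ▸ dvd_mul_left e' d')
  exact ⟨h1, h2⟩

lemma TightMap.mul {a b : ℕ} (hab : a.Coprime b) (ha : TightMap a) (hb : TightMap b) :
    TightMap (a * b) := by
  obtain ⟨da, ρ, h1, h2, h3⟩ := ha
  obtain ⟨db, σ, k1, k2, k3⟩ := hb
  rw [TightMap, hab.card_divisors_mul]
  refine ⟨mul_dvd_mul da db, fun x => ρ x * σ x, ?_, ?_, ?_⟩
  · intro x
    have := h1 x; have := k1 x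
    rw [Nat.mem_divisors] at *
    exact ⟨mul_dvd_mul (by tauto) (by tauto), mul_ne_zero (by tauto) (by tauto)⟩
  · exact fun x => Nat.Coprime.mul_right (h2 x) (k2 x)
  · intro x y hxy
    rw [← Nat.modEq_and_modEq_iff_modEq_mul (Nat.Coprime.of_dvd da db hab)]
    have := coprime_mul_inj hab (Nat.dvd_of_mem_divisors (h1 x)) (Nat.dvd_of_mem_divisors (h1 y))
      (Nat.dvd_of_mem_divisors (k1 x)) (Nat.dvd_of_mem_divisors (k1 y)) hxy
    exact ⟨h3 _ _ this.1, k3 _ _ this.2⟩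

/-- The Chinese remainder theorem, as independence of the residues modulo `a` and modulo `b`. -/
lemma sum_range_crt {a b : ℕ} (ha : a ≠ 0) (hb : b ≠ 0) (hab : a.Coprime b) (f g : ℕ → ℝ)
    (hf : ∀ x y, x ≡ y [MOD a] → f x = f y) (hg : ∀ x y, x ≡ y [MOD b] → g x = g y) :
    ∑ x ∈ Finset.range (a * b), f x * g x
      = (∑ x ∈ Finset.range a, f x) * ∑ x ∈ Finset.range b, g x := by
  rw [Finset.sum_mul_sum, ← Finset.sum_product']
  refine Finset.sum_bij (fun x _ => (x % a, x % b)) ?_ ?_ ?_ ?_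
  · intro x _
    simp [Nat.mod_lt _ (Nat.pos_of_ne_zero ha), Nat.mod_lt _ (Nat.pos_of_ne_zero hb)]
  · intro x hx y hy h
    rw [Prod.mk.injEq] at h
    have := (Nat.modEq_and_modEq_iff_modEq_mul hab).1 h
    exact this.eq_of_lt_of_lt (Finset.mem_range.1 hx) (Finset.mem_range.1 hy)
  · rintro ⟨u, v⟩ huv
    simp only [Finset.mem_product, Finset.mem_range] at huv
    refine ⟨Nat.chineseRemainder hab u v, ?_, ?_⟩
    · rw [Finset.mem_range]; exact Nat.chineseRemainder_lt_mul hab u v ha hb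
    · have := (Nat.chineseRemainder hab u v).2
      rw [Prod.mk.injEq]
      exact ⟨Eq.trans this.1 (Nat.mod_eq_of_lt huv.1), Eq.trans this.2 (Nat.mod_eq_of_lt huv.2)⟩
  · intro x _
    rw [hf x (x % a) (Nat.mod_modEq _ _).symm, hg x (x % b) (Nat.mod_modEq _ _).symm]

lemma sum_divisors_coprime_mul {a b : ℕ} (hab : a.Coprime b) (F : ℕ → ℝ) :
    ∑ e ∈ (a * b).divisors, F e = ∑ d ∈ a.divisors, ∑ e ∈ b.divisors, F (d * e) := by
  rw [← Finset.sum_product', Nat.divisors_mul, Finset.mul_def,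
    Finset.sum_image hab.mul_injOn_divisors]

lemma gcd_mul_of_coprime {a b d e : ℕ} (hab : a.Coprime b) (hd : d ∣ a) (he : e ∣ b) :
    Nat.gcd (d * e) a = d ∧ Nat.gcd (d * e) b = e := by
  constructor
  · rw [Nat.Coprime.gcd_mul_right_cancel d (Nat.Coprime.of_dvd he dvd_rfl hab.symm)]
    exact Nat.gcd_eq_left hd
  · rw [Nat.Coprime.gcd_mul_left_cancel e (Nat.Coprime.of_dvd hd dvd_rfl hab)]
    exact Nat.gcd_eq_left he

lemma exists_divisor_mul {a b e : ℕ} (he : e ∈ (a * b).divisors) :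
    ∃ d₁ ∈ a.divisors, ∃ d₂ ∈ b.divisors, e = d₁ * d₂ := by
  rw [Nat.divisors_mul, Finset.mem_mul] at he
  obtain ⟨x, hx, y, hy, rfl⟩ := he
  exact ⟨x, hx, y, hy, rfl⟩

/-- The product of couplings for coprime `a` and `b`: a divisor of `a * b` is identified with the pair
`(gcd e a, gcd e b)`. -/
lemma IsCoupling.mul {a b : ℕ} (ha0 : a ≠ 0) (hb0 : b ≠ 0) (hab : a.Coprime b)
    {W V : ℕ → ℕ → ℝ} (hW : IsCoupling a W) (hV : IsCoupling b V) :
    IsCoupling (a * b) (fun x e => W x (Nat.gcd e a) * V x (Nat.gcd e b)) where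
  nonneg x e := mul_nonneg (hW.nonneg _ _) (hV.nonneg _ _)
  periodic x y e h := by
    have := (Nat.modEq_and_modEq_iff_modEq_mul hab).2 h
    rw [hW.periodic x y _ this.1, hV.periodic x y _ this.2]
  row x := by
    rw [sum_divisors_coprime_mul hab]
    have : ∀ d ∈ a.divisors, ∀ e ∈ b.divisors,
        W x (Nat.gcd (d * e) a) * V x (Nat.gcd (d * e) b) = W x d * V x e := by
      intro d hd e he
      obtain ⟨h1, h2⟩ := gcd_mul_of_coprime hab (Nat.dvd_of_mem_divisors hd)
        (Nat.dvd_of_mem_divisors he)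
      rw [h1, h2]
    rw [Finset.sum_congr rfl (fun d hd => Finset.sum_congr rfl (this d hd)),
      ← Finset.sum_mul_sum, hW.row, hV.row, one_mul]
  supp x e he h := by
    obtain ⟨d₁, h1, d₂, h2, rfl⟩ := exists_divisor_mul he
    obtain ⟨e1, e2⟩ := gcd_mul_of_coprime hab (Nat.dvd_of_mem_divisors h1)
        (Nat.dvd_of_mem_divisors h2)
    rw [e1, e2] at h
    exact Nat.Coprime.mul_right (hW.supp x d₁ h1 (left_ne_zero_of_mul h))
      (hV.supp x d₂ h2 (right_ne_zero_of_mul h))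
  col e he := by
    obtain ⟨d₁, h1, d₂, h2, rfl⟩ := exists_divisor_mul he
    obtain ⟨e1, e2⟩ := gcd_mul_of_coprime hab (Nat.dvd_of_mem_divisors h1)
        (Nat.dvd_of_mem_divisors h2)
    rw [e1, e2, sum_range_crt ha0 hb0 hab (fun x => W x d₁) (fun x => V x d₂)
      (fun x y h => hW.periodic x y _ h) (fun x y h => hV.periodic x y _ h), hW.col _ h1,
      hV.col _ h2, hab.card_divisors_mul]
    push_cast
    rw [div_mul_div_comm]
  pos x e he h := by
    obtain ⟨d₁, h1, d₂, h2, rfl⟩ := exists_divisor_mul he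
    obtain ⟨e1, e2⟩ := gcd_mul_of_coprime hab (Nat.dvd_of_mem_divisors h1)
        (Nat.dvd_of_mem_divisors h2)
    rw [e1, e2]
    exact mul_pos (hW.pos _ _ h1 h.coprime_mul_right_right)
      (hV.pos _ _ h2 h.coprime_mul_left_right)

/-- If `a + 1 < p`, then `p ^ a` has a coupling: multiples of `p` put all their weight on the divisor
`1`, which is less than its capacity since `1 / p < 1 / (a + 1)`, and the remaining integers spread
their weight over all `a + 1` divisors. -/
lemma isCoupling_prime_pow {p a : ℕ} (hp : p.Prime) (ha : 0 < a) (hap : a + 1 < p) :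
    ∃ W, IsCoupling (p ^ a) W := by
  have hpR : (a : ℝ) + 1 < p := by exact_mod_cast hap
  have ha0 : (0 : ℝ) < a := by exact_mod_cast ha
  have hcard : (p ^ a).divisors.card = a + 1 := by
    rw [Nat.divisors_prime_pow hp]; simp
  have h1p : (0 : ℝ) < p - 1 := by linarith
  have hcop : ∀ x, Nat.Coprime x (p ^ a) ↔ ¬ p ∣ x := by
    intro x
    rw [Nat.coprime_comm, Nat.coprime_pow_left_iff ha, hp.coprime_iff_not_dvd]
  -- `α` and `β` are the weights given by `x` prime to `p` to the divisor `1` and to each other divisor.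
  -- They solve `α + a * β = 1` (row sums) and `(1 - 1 / p) * β = 1 / (a + 1)` (column sums).
  set α : ℝ := (p - a - 1) / ((a + 1) * (p - 1)) with hα
  set β : ℝ := p / ((a + 1) * (p - 1)) with hβ
  have hαpos : 0 < α := by
    apply div_pos <;> [linarith; positivity]
  have hβpos : 0 < β := by
    apply div_pos <;> [linarith; positivity]
  refine ⟨fun x e => if p ∣ x then (if e = 1 then 1 else 0) else (if e = 1 then α else β),
    ?_, ?_, ?_, ?_, ?_, ?_⟩
  · intro x e
    split_ifs <;> positivity
  · intro x y e h
    have : p ∣ x ↔ p ∣ y := (h.of_dvd (dvd_pow_self p ha.ne')).dvd_iff dvd_rfl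
    simp only [this]
  · intro x
    have hne : ∀ i, p ^ (i + 1) ≠ 1 := fun i =>
      (Nat.one_lt_pow (Nat.succ_ne_zero i) hp.one_lt).ne'
    rw [Nat.sum_divisors_prime_pow hp, Finset.sum_range_succ']
    by_cases h : p ∣ x
    · simp [h, hp.ne_one]
    · simp only [h, if_false, hne, pow_zero, if_true, Finset.sum_const, Finset.card_range,
        nsmul_eq_mul, hα, hβ]
      field_simp
      ring
  · intro x e he h
    by_cases hx : p ∣ x
    · simp only [hx, if_true] at h
      have : e = 1 := by by_contra hh; simp [hh] at h
      simp [this]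
    · exact Nat.Coprime.of_dvd dvd_rfl (Nat.dvd_of_mem_divisors he) ((hcop x).2 hx)
  · intro e he
    have hc1 : ((Finset.range (p ^ a)).filter (fun x => ¬ p ∣ x)).card = p ^ (a - 1) * (p - 1) := by
      rw [← Nat.totient_prime_pow hp ha, Nat.totient_eq_card_coprime]
      congr 1
      ext x
      simp only [Finset.mem_filter, ← hcop x, Nat.coprime_comm]
    have hc2 : ((Finset.range (p ^ a)).filter (fun x => p ∣ x)).card = p ^ (a - 1) := by
      have := Finset.card_filter_add_card_filter_not (s := Finset.range (p ^ a)) (fun x => p ∣ x)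
      rw [hc1, Finset.card_range] at this
      obtain ⟨c, rfl⟩ : ∃ c, a = c + 1 := ⟨a - 1, by omega⟩
      obtain ⟨q, rfl⟩ : ∃ q, p = q + 1 := ⟨p - 1, by omega⟩
      simp only [Nat.add_sub_cancel] at this ⊢
      have h3 : (q + 1) ^ (c + 1) = (q + 1) ^ c + (q + 1) ^ c * q := by ring
      omega
    rw [Finset.sum_ite, Finset.sum_const, Finset.sum_const, hc1, hc2, hcard]
    obtain ⟨c, rfl⟩ : ∃ c, a = c + 1 := ⟨a - 1, by omega⟩
    simp only [nsmul_eq_mul, Nat.add_sub_cancel]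
    push_cast [Nat.cast_sub hp.one_lt.le]
    push_cast at hα hβ h1p ha0 hpR
    have : (0 : ℝ) < p := by linarith
    split_ifs
    · rw [hα]; field_simp; ring
    · rw [hβ]; field_simp; ring
  · intro x e he h
    rw [hcop] at h
    simp only [h, if_false]
    split_ifs <;> assumption

/-- An M-number is the product of a tight number (the prime powers with exponent exactly `p - 1`)
and a coprime number with a coupling (the prime powers with smaller exponent). -/
lemma exists_split (m : ℕ) (hm : m ≠ 0) (hM : ∀ p : ℕ, p.Prime → ¬ p ^ p ∣ m) :
    ∃ m₁ m₂ : ℕ, m = m₁ * m₂ ∧ m₁.Coprime m₂ ∧ TightMap m₁ ∧ ∃ W, IsCoupling m₂ W := by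
  induction m using Nat.recOnPosPrimePosCoprime with
  | zero => exact absurd rfl hm
  | one => exact ⟨1, 1, rfl, by simp, tightMap_one, _, isCoupling_one⟩
  | prime_pow p a hp ha =>
    have : a < p := by
      by_contra h
      exact hM p hp (pow_dvd_pow p (by omega))
    by_cases h : a + 1 = p
    · refine ⟨p ^ a, 1, by simp, by simp, ?_, _, isCoupling_one⟩
      have := tightMap_prime_pow hp
      rwa [show p - 1 = a by omega] at this
    · exact ⟨1, p ^ a, by simp, by simp, tightMap_one, isCoupling_prime_pow hp ha (by omega)⟩
  | coprime a b ha hb hab iha ihb =>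
    obtain ⟨a₁, a₂, rfl, ca, ta, W, hW⟩ := iha (by omega)
      (fun p hp h => hM p hp (h.mul_right _))
    obtain ⟨b₁, b₂, rfl, cb, tb, V, hV⟩ := ihb (by omega)
      (fun p hp h => hM p hp (h.mul_left _))
    have h11 : a₁.Coprime b₁ := hab.coprime_mul_right.coprime_mul_right_right
    have h12 : a₁.Coprime b₂ := hab.coprime_mul_right.coprime_mul_left_right
    have h21 : a₂.Coprime b₁ := hab.coprime_mul_left.coprime_mul_right_right
    have h22 : a₂.Coprime b₂ := hab.coprime_mul_left.coprime_mul_left_right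
    refine ⟨a₁ * b₁, a₂ * b₂, by ring, ?_, ta.mul h11 tb, _, hW.mul ?_ ?_ h22 hV⟩
    · exact Nat.Coprime.mul_left (Nat.Coprime.mul_right ca h12)
        (Nat.Coprime.mul_right h21.symm cb)
    · rintro rfl; simp at ha
    · rintro rfl; simp at hb

/-! ### Assigning divisors of the smooth part -/

lemma card_modEq_le {r : ℕ} (hr : 0 < r) (q v : ℕ) :
    ((Finset.Icc 1 (r * q)).filter (fun j => j ≡ v [MOD r])).card ≤ q := by
  have h := Nat.Ioc_filter_modEq_card 0 (r * q) hr v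
  have hr' : (r : ℚ) ≠ 0 := by exact_mod_cast hr.ne'
  have e1 : (((r * q : ℕ) : ℚ) - v) / r = (((0 : ℕ) : ℚ) - v) / r + (q : ℤ) := by
    push_cast; field_simp; ring
  rw [e1, Int.floor_add_intCast, add_sub_cancel_left, max_eq_left (by positivity)] at h
  have h' : ((Finset.Ioc 0 (r * q)).filter (fun j => j ≡ v [MOD r])).card = q := by
    exact_mod_cast h
  exact h'.le

lemma card_modEq_le' {r : ℕ} (hr : 0 < r) (k v : ℕ) :
    ((Finset.Icc 1 k).filter (fun j => j ≡ v [MOD r])).card ≤ k / r + 1 := by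
  refine le_trans (Finset.card_le_card ?_) (card_modEq_le hr (k / r + 1) v)
  apply Finset.filter_subset_filter
  apply Finset.Icc_subset_Icc le_rfl
  exact (Nat.lt_mul_div_succ k hr).le

/-- In a residue class modulo `t`, the weight put on `e` by the integers not coprime to `m` is at most
the expected proportion, up to one extra period. -/
lemma column_bound {t m : ℕ} (ht : t ≠ 0) (hm : m ≠ 0) (htm : t.Coprime m) {W : ℕ → ℕ → ℝ}
    (hW : IsCoupling m W) (e : ℕ) (N b : ℕ) :
    ∑ j ∈ (Finset.Icc 1 (t * N)).filter (fun j => j ≡ b [MOD t] ∧ ¬ j.Coprime m), W j e ≤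
      ((N : ℝ) / m + 1) * ∑ x ∈ (Finset.range m).filter (fun x => ¬ x.Coprime m), W x e := by
  have hcop : ∀ j, Nat.Coprime (j % m) m ↔ Nat.Coprime j m := by
    intro j
    rw [Nat.Coprime, Nat.Coprime, ← Nat.gcd_rec, Nat.gcd_comm]
  rw [← Finset.sum_fiberwise_of_maps_to (g := fun j => j % m)
    (t := (Finset.range m).filter (fun x => ¬ x.Coprime m)), Finset.mul_sum]
  · apply Finset.sum_le_sum
    intro x _
    have h1 : ∀ j ∈ ((Finset.Icc 1 (t * N)).filter
        (fun j => j ≡ b [MOD t] ∧ ¬ j.Coprime m)).filter (fun j => j % m = x), W j e = W x e := by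
      intro j hj
      rw [← (Finset.mem_filter.1 hj).2]
      exact hW.periodic _ _ _ (Nat.mod_modEq _ _).symm
    rw [Finset.sum_congr rfl h1, Finset.sum_const, nsmul_eq_mul]
    apply mul_le_mul_of_nonneg_right _ (hW.nonneg _ _)
    have hcard : (((Finset.Icc 1 (t * N)).filter
        (fun j => j ≡ b [MOD t] ∧ ¬ j.Coprime m)).filter (fun j => j % m = x)).card
        ≤ t * N / (t * m) + 1 := by
      refine le_trans (Finset.card_le_card ?_) (card_modEq_le'
        (Nat.mul_pos (Nat.pos_of_ne_zero ht) (Nat.pos_of_ne_zero hm)) (t * N)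
        (Nat.chineseRemainder htm b x))
      intro j hj
      simp only [Finset.mem_filter] at hj ⊢
      refine ⟨hj.1.1, ?_⟩
      rw [← Nat.modEq_and_modEq_iff_modEq_mul htm]
      have hc := (Nat.chineseRemainder htm b x).2
      refine ⟨hj.1.2.1.trans hc.1.symm, Nat.ModEq.trans ?_ hc.2.symm⟩
      rw [← hj.2]
      exact (Nat.mod_modEq _ _).symm
    rw [Nat.mul_div_mul_left _ _ (Nat.pos_of_ne_zero ht)] at hcard
    calc _ ≤ ((N / m + 1 : ℕ) : ℝ) := by exact_mod_cast hcard
      _ ≤ (N : ℝ) / m + 1 := by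
        push_cast
        gcongr
        exact Nat.cast_div_le
  · intro j hj
    simp only [Finset.mem_filter, Finset.mem_range] at hj ⊢
    exact ⟨Nat.mod_lt _ (Nat.pos_of_ne_zero hm), by rw [hcop]; exact hj.2.2⟩

/-- For large `L` the strict slack of the coupling absorbs the rounding error in `column_bound`. The
witness for strictness is the residue class of `1`, which is coprime to `m`. -/
lemma eventually_column_bound {t m : ℕ} (ht : t ≠ 0) (hm : m ≠ 0) (htm : t.Coprime m)
    {W : ℕ → ℕ → ℝ} (hW : IsCoupling m W) :
    ∀ᶠ L : ℕ in Filter.atTop, ∀ e ∈ m.divisors, ∀ b,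
      ∑ j ∈ (Finset.Icc 1 (t * (m.divisors.card * L))).filter
        (fun j => j ≡ b [MOD t] ∧ ¬ j.Coprime m), W j e ≤ L := by
  rw [Filter.eventually_all_finset]
  intro e he
  set τ : ℝ := (m.divisors.card : ℝ) with hτ
  have hτ0 : 0 < τ := by
    rw [hτ]; exact_mod_cast Finset.card_pos.2 ⟨e, he⟩
  have hm0 : (0 : ℝ) < m := by exact_mod_cast Nat.pos_of_ne_zero hm
  set S : ℝ := ∑ x ∈ (Finset.range m).filter (fun x => ¬ x.Coprime m), W x e with hS
  have hlt : S < m / τ := by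
    rw [← hW.col e he, hS]
    apply Finset.sum_lt_sum_of_subset (Finset.filter_subset _ _) (i := 1 % m)
    · exact Finset.mem_range.2 (Nat.mod_lt _ (Nat.pos_of_ne_zero hm))
    · simp [Nat.Coprime, ← Nat.gcd_rec]
    · apply hW.pos _ _ he
      simp [Nat.Coprime, ← Nat.gcd_rec]
    · exact fun _ _ _ => hW.nonneg _ _
  have hd : 0 < 1 - τ / m * S := by
    have : τ / m * S < τ / m * (m / τ) := by gcongr
    have h2 : τ / m * (m / τ) = 1 := by field_simp
    linarith
  filter_upwards [Filter.eventually_ge_atTop ⌈S / (1 - τ / m * S)⌉₊] with L hL b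
  refine (column_bound ht hm htm hW e _ b).trans ?_
  have hL' : S / (1 - τ / m * S) ≤ L := Nat.ceil_le.1 hL
  rw [div_le_iff₀ hd] at hL'
  push_cast
  rw [← hτ, ← hS]
  have : (τ * L / m + 1) * S = L * (τ / m * S) + S := by ring
  rw [this]
  linarith

/-- Within one residue class modulo `t`, each `j` can be given a divisor of `m` coprime to it so that
every divisor is used at most `L` times. This is Hall's theorem with `L` copies of each divisor: a set
of integers containing one coprime to `m` sees all divisors, and for any other set the coupling
gives the inequality. -/
lemma slack_assign {t m : ℕ} (ht : t ≠ 0) (hm : m ≠ 0) (htm : t.Coprime m) {W : ℕ → ℕ → ℝ}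
    (hW : IsCoupling m W) :
    ∀ᶠ L : ℕ in Filter.atTop, ∀ b : ℕ, ∃ g : ℕ → ℕ,
      (∀ j ∈ (Finset.Icc 1 (t * (m.divisors.card * L))).filter (fun j => j ≡ b [MOD t]),
        g j ∈ m.divisors ∧ j.Coprime (g j)) ∧
      ∀ e, (((Finset.Icc 1 (t * (m.divisors.card * L))).filter
        (fun j => j ≡ b [MOD t])).filter (fun j => g j = e)).card ≤ L := by
  filter_upwards [eventually_column_bound ht hm htm hW] with L hL b
  set J := (Finset.Icc 1 (t * (m.divisors.card * L))).filter (fun j => j ≡ b [MOD t]) with hJ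
  have hJc : J.card ≤ m.divisors.card * L := card_modEq_le (Nat.pos_of_ne_zero ht) _ _
  have hall : ∀ A ⊆ J, A.card ≤ (A.biUnion (fun j =>
      (m.divisors.filter (fun e => j.Coprime e)) ×ˢ Finset.range L)).card := by
    intro A hA
    have hbi : A.biUnion (fun j => (m.divisors.filter (fun e => j.Coprime e)) ×ˢ Finset.range L)
        = (A.biUnion (fun j => m.divisors.filter (fun e => j.Coprime e))) ×ˢ Finset.range L := by
      ext ⟨x, y⟩
      simp only [Finset.mem_biUnion, Finset.mem_product]
      tauto
    rw [hbi, Finset.card_product, Finset.card_range]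
    set N := A.biUnion (fun j => m.divisors.filter (fun e => j.Coprime e)) with hN
    have hNsub : N ⊆ m.divisors := by
      intro e he
      simp only [hN, Finset.mem_biUnion, Finset.mem_filter] at he
      obtain ⟨_, _, h, _⟩ := he
      exact h
    by_cases hcop : ∃ j ∈ A, j.Coprime m
    · obtain ⟨j, hj, hjm⟩ := hcop
      have : N = m.divisors := by
        apply hNsub.antisymm
        intro e he
        simp only [hN, Finset.mem_biUnion, Finset.mem_filter]
        exact ⟨j, hj, he, Nat.Coprime.of_dvd dvd_rfl (Nat.dvd_of_mem_divisors he) hjm⟩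
      rw [this]
      exact (Finset.card_le_card hA).trans hJc
    · push Not at hcop
      have h1 : (A.card : ℝ) ≤ N.card * L := by
        calc (A.card : ℝ) = ∑ j ∈ A, ∑ e ∈ m.divisors, W j e := by
              simp [hW.row]
          _ = ∑ j ∈ A, ∑ e ∈ N, W j e := by
              apply Finset.sum_congr rfl
              intro j hj
              symm
              apply Finset.sum_subset hNsub
              intro e he heN
              by_contra hne
              apply heN
              simp only [hN, Finset.mem_biUnion, Finset.mem_filter]
              exact ⟨j, hj, he, hW.supp _ _ he hne⟩
          _ = ∑ e ∈ N, ∑ j ∈ A, W j e := Finset.sum_comm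
          _ ≤ ∑ e ∈ N, (L : ℝ) := by
              apply Finset.sum_le_sum
              intro e he
              refine le_trans ?_ (hL e (hNsub he) b)
              apply Finset.sum_le_sum_of_subset_of_nonneg
              · intro j hj
                have := hA hj
                rw [hJ, Finset.mem_filter] at this
                exact Finset.mem_filter.2 ⟨this.1, this.2, hcop j hj⟩
              · exact fun _ _ _ => hW.nonneg _ _
          _ = N.card * L := by simp
      exact_mod_cast h1
  obtain ⟨f, hinj, hf⟩ := hall_on J
    _ (0, 0) hall
  refine ⟨fun j => (f j).1, ?_, ?_⟩
  · intro j hj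
    have := hf j hj
    rw [Finset.mem_product, Finset.mem_filter] at this
    exact this.1
  · intro e
    rw [← Finset.card_range L]
    apply Finset.card_le_card_of_injOn (fun j => (f j).2)
    · intro j hj
      have := hf j (Finset.mem_filter.1 hj).1
      rw [Finset.mem_product] at this
      exact this.2
    · intro x hx y hy hxy
      have hx' := Finset.mem_filter.1 hx
      have hy' := Finset.mem_filter.1 hy
      exact hinj hx'.1 hy'.1 (Prod.ext (hx'.2.trans hy'.2.symm) hxy)

/-- For an M-number `m` and all large `L`, the integers up to `τ(m) * L` can be given divisors of `m`
coprime to them, each divisor being used at most `L` times. The component in the tight part is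
read off from the residue of `j` modulo its number of divisors; the other component comes from
`slack_assign` applied in each residue class. -/
lemma small_assign (m : ℕ) (hm : m ≠ 0) (hM : ∀ p : ℕ, p.Prime → ¬ p ^ p ∣ m) :
    ∀ᶠ L : ℕ in Filter.atTop, ∃ g : ℕ → ℕ,
      (∀ j ∈ Finset.Icc 1 (m.divisors.card * L), g j ∈ m.divisors ∧ j.Coprime (g j)) ∧
      ∀ e, ((Finset.Icc 1 (m.divisors.card * L)).filter (fun j => g j = e)).card ≤ L := by
  obtain ⟨m₁, m₂, rfl, hc, ⟨hdvd, ρ, h1, h2, h3⟩, W, hW⟩ := exists_split m hm hM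
  have hm1 : m₁ ≠ 0 := left_ne_zero_of_mul hm
  have hm2 : m₂ ≠ 0 := right_ne_zero_of_mul hm
  have ht : m₁.divisors.card ≠ 0 := (Nat.pos_of_dvd_of_pos hdvd (Nat.pos_of_ne_zero hm1)).ne'
  have htm : m₁.divisors.card.Coprime m₂ := Nat.Coprime.of_dvd hdvd dvd_rfl hc
  filter_upwards [slack_assign ht hm2 htm hW] with L hL
  choose g hg1 hg2 using hL
  rw [hc.card_divisors_mul, mul_assoc]
  set K := m₁.divisors.card * (m₂.divisors.card * L) with hK
  set t := m₁.divisors.card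
  have hg1' : ∀ j ∈ Finset.Icc 1 K, g (j % t) j ∈ m₂.divisors ∧ j.Coprime (g (j % t) j) := by
    intro j hj
    exact hg1 (j % t) j (Finset.mem_filter.2 ⟨hj, (Nat.mod_modEq _ _).symm⟩)
  refine ⟨fun j => ρ j * g (j % t) j, ?_, ?_⟩
  · intro j hj
    have a1 := h1 j
    obtain ⟨a2, a3⟩ := hg1' j hj
    refine ⟨?_, Nat.Coprime.mul_right (h2 j) a3⟩
    rw [Nat.mem_divisors]
    exact ⟨mul_dvd_mul (Nat.dvd_of_mem_divisors a1) (Nat.dvd_of_mem_divisors a2), hm⟩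
  · intro e
    rcases ((Finset.Icc 1 K).filter (fun j => ρ j * g (j % t) j = e)).eq_empty_or_nonempty with
      h | ⟨j₀, hj₀⟩
    · rw [h]; simp
    · obtain ⟨hj₀K, hj₀e⟩ := Finset.mem_filter.1 hj₀
      refine le_trans (Finset.card_le_card ?_) (hg2 (j₀ % t) (g (j₀ % t) j₀))
      intro j hj
      obtain ⟨hjK, hje⟩ := Finset.mem_filter.1 hj
      obtain ⟨q1, q2⟩ := coprime_mul_inj hc (Nat.dvd_of_mem_divisors (h1 j))
        (Nat.dvd_of_mem_divisors (h1 j₀)) (Nat.dvd_of_mem_divisors (hg1' j hjK).1)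
        (Nat.dvd_of_mem_divisors (hg1' j₀ hj₀K).1) (hje.trans hj₀e.symm)
      have hmod : j % t = j₀ % t := h3 _ _ q1
      rw [hmod] at q2
      refine Finset.mem_filter.2 ⟨Finset.mem_filter.2 ⟨hjK, ?_⟩, q2⟩
      exact Eq.trans hmod (Nat.mod_mod _ _).symm

/-! ### Matching with the divisors of the rough part -/

/-- At most `k δ ^ u` of the integers up to `k` are divisible by `u` or more primes of `Q`, where
`δ = ∑ 1 / p`: remove one prime of `Q` at a time. -/
lemma card_many_primes_le (Q : Finset ℕ) (hQ : ∀ p ∈ Q, p.Prime) (u k : ℕ) :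
    (((Finset.Icc 1 k).filter (fun j => u ≤ (Q.filter (· ∣ j)).card)).card : ℝ)
      ≤ k * (∑ p ∈ Q, (1 : ℝ) / p) ^ u := by
  induction u generalizing k with
  | zero =>
    simp
  | succ u ih =>
    set δ : ℝ := ∑ p ∈ Q, (1 : ℝ) / p with hδ
    have hδ0 : 0 ≤ δ := Finset.sum_nonneg fun _ _ => by positivity
    have hsub : (Finset.Icc 1 k).filter (fun j => u + 1 ≤ (Q.filter (· ∣ j)).card) ⊆
        Q.biUnion (fun p => ((Finset.Icc 1 (k / p)).filter
          (fun j => u ≤ (Q.filter (· ∣ j)).card)).image (fun i => p * i)) := by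
      intro j hj
      obtain ⟨hjk, hju⟩ := Finset.mem_filter.1 hj
      obtain ⟨p, hp⟩ := Finset.card_pos.1 (lt_of_lt_of_le (Nat.succ_pos u) hju)
      obtain ⟨hpQ, i, rfl⟩ := Finset.mem_filter.1 hp
      rw [Finset.mem_Icc] at hjk
      have hp0 : 0 < p := (hQ p hpQ).pos
      refine Finset.mem_biUnion.2 ⟨p, hpQ, Finset.mem_image.2 ⟨i, Finset.mem_filter.2 ⟨?_, ?_⟩, rfl⟩⟩
      · rw [Finset.mem_Icc, Nat.le_div_iff_mul_le hp0, mul_comm]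
        exact ⟨Nat.pos_of_mul_pos_left hjk.1, hjk.2⟩
      · have : Q.filter (· ∣ p * i) ⊆ insert p (Q.filter (· ∣ i)) := by
          intro q hq
          obtain ⟨hqQ, hqd⟩ := Finset.mem_filter.1 hq
          rw [Finset.mem_insert, Finset.mem_filter]
          rcases (hQ q hqQ).dvd_mul.1 hqd with h | h
          · exact Or.inl ((Nat.prime_dvd_prime_iff_eq (hQ q hqQ) (hQ p hpQ)).1 h)
          · exact Or.inr ⟨hqQ, h⟩
        have h1 := Finset.card_le_card this
        have h2 := Finset.card_insert_le p (Q.filter (· ∣ i))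
        omega
    calc (((Finset.Icc 1 k).filter (fun j => u + 1 ≤ (Q.filter (· ∣ j)).card)).card : ℝ)
        ≤ ∑ p ∈ Q, (((Finset.Icc 1 (k / p)).filter
          (fun j => u ≤ (Q.filter (· ∣ j)).card)).card : ℝ) := by
          have := (Finset.card_le_card hsub).trans (Finset.card_biUnion_le.trans
            (Finset.sum_le_sum fun p _ => Finset.card_image_le))
          exact_mod_cast this
      _ ≤ ∑ p ∈ Q, (k : ℝ) * (1 / p) * δ ^ u := by
          apply Finset.sum_le_sum
          intro p _
          refine (ih (k / p)).trans ?_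
          gcongr
          rw [mul_one_div]
          exact Nat.cast_div_le
      _ = k * δ ^ (u + 1) := by
          rw [← Finset.sum_mul, ← Finset.mul_sum, pow_succ]; ring

lemma card_divisors_squarefree {r : ℕ} (hr : Squarefree r) :
    r.divisors.card = 2 ^ r.primeFactors.card := by
  rw [Nat.card_divisors hr.ne_zero, ← Finset.prod_const]
  apply Finset.prod_congr rfl
  intro p hp
  rw [Nat.factorization_eq_one_of_squarefree hr (Nat.prime_of_mem_primeFactors hp)
    (Nat.dvd_of_mem_primeFactors hp)]

/-- The products of the prime factors of `r` not dividing `j` are divisors of `r` coprime to `j`. -/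
lemma card_coprime_divisors_ge {r : ℕ} (hr : Squarefree r) (j : ℕ) :
    2 ^ (r.primeFactors.card - (r.primeFactors.filter (· ∣ j)).card)
      ≤ (r.divisors.filter (fun f => j.Coprime f)).card := by
  set V := r.primeFactors.filter (fun p => ¬ p ∣ j) with hV
  have hc : r.primeFactors.card - (r.primeFactors.filter (· ∣ j)).card = V.card := by
    have : (r.primeFactors.filter (· ∣ j)).card + V.card = r.primeFactors.card :=
      Finset.card_filter_add_card_filter_not _
    omega
  have hVr : V ⊆ r.primeFactors := Finset.filter_subset _ _
  rw [hc, ← Finset.card_powerset]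
  apply Finset.card_le_card_of_injOn (fun X => ∏ p ∈ X, p)
  · intro X hX
    have hX' : X ⊆ V := Finset.mem_powerset.1 hX
    refine Finset.mem_filter.2 ⟨Nat.mem_divisors.2 ⟨?_, hr.ne_zero⟩, ?_⟩
    · rw [← Nat.prod_primeFactors_of_squarefree hr]
      exact Finset.prod_dvd_prod_of_subset _ _ _ (hX'.trans hVr)
    · apply Nat.Coprime.prod_right
      intro p hp
      have := Finset.mem_filter.1 (hX' hp)
      exact (((Nat.prime_of_mem_primeFactors this.1).coprime_iff_not_dvd).2 this.2).symm
  · intro X hX Y hY hXY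
    have hX' : X ⊆ V := Finset.mem_powerset.1 hX
    have hY' : Y ⊆ V := Finset.mem_powerset.1 hY
    rw [← Nat.primeFactors_prod (s := X)
        (fun p hp => Nat.prime_of_mem_primeFactors (hVr (hX' hp))),
      ← Nat.primeFactors_prod (s := Y)
        (fun p hp => Nat.prime_of_mem_primeFactors (hVr (hY' hp)))]
    exact congrArg _ hXY

/-- An assignment of divisors of `m` to the integers up to `τ(m) τ(r)` with fibres of size at most
`τ(r)` extends to a matching for `m * r`. In each fibre, the integers are matched with the divisors
of `r` by Hall's theorem: if every member of a set of integers is divisible by at least `u ≥ 1`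
primes of `r`, with equality for some `j`, then the set has at most `2 ^ (ω(r) - u)` elements, and
`j` alone is coprime to that many divisors of `r`. -/
lemma matchable_of_assign {m r : ℕ} (hm : m ≠ 0) (hr : Squarefree r) (hc : m.Coprime r)
    (hδ : 2 * (m.divisors.card : ℝ) * ∑ p ∈ r.primeFactors, (1 : ℝ) / p ≤ 1)
    {g : ℕ → ℕ}
    (hg : ∀ j ∈ Finset.Icc 1 (m.divisors.card * r.divisors.card),
      g j ∈ m.divisors ∧ j.Coprime (g j))
    (hfib : ∀ e, ((Finset.Icc 1 (m.divisors.card * r.divisors.card)).filter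
      (fun j => g j = e)).card ≤ r.divisors.card) :
    Matchable (m * r) := by
  set k := m.divisors.card * r.divisors.card with hk
  set s := r.primeFactors.card with hs
  set δ : ℝ := ∑ p ∈ r.primeFactors, (1 : ℝ) / p with hδdef
  have hδ0 : 0 ≤ δ := Finset.sum_nonneg fun _ _ => by positivity
  have hτ : (1 : ℝ) ≤ m.divisors.card := by
    exact_mod_cast Finset.card_pos.2 ⟨1, Nat.one_mem_divisors.2 hm⟩
  have hrc : r.divisors.card = 2 ^ s := card_divisors_squarefree hr
  set U : ℕ → ℕ := fun j => (r.primeFactors.filter (· ∣ j)).card with hU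
  have hUs : ∀ j, U j ≤ s := fun j => Finset.card_filter_le _ _
  have hcount : ∀ u, 1 ≤ u → u ≤ s →
      ((Finset.Icc 1 k).filter (fun j => u ≤ U j)).card ≤ 2 ^ (s - u) := by
    intro u hu hus
    have h1 := card_many_primes_le r.primeFactors (fun p => Nat.prime_of_mem_primeFactors) u k
    have h2 : (k : ℝ) * δ ^ u ≤ 2 ^ (s - u) := by
      have hk' : (k : ℝ) = m.divisors.card * (2 ^ (s - u) * 2 ^ u) := by
        rw [← pow_add, Nat.sub_add_cancel hus, hk, hrc]; push_cast; ring
      have h2δ : 2 * δ ≤ 1 := by nlinarith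
      have h3 : (2 * δ) ^ u ≤ 2 * δ := by
        calc (2 * δ) ^ u ≤ (2 * δ) ^ 1 := pow_le_pow_of_le_one (by positivity) h2δ hu
          _ = _ := pow_one _
      have h4 : (m.divisors.card : ℝ) * (2 * δ) ^ u ≤ 1 := by nlinarith
      calc (k : ℝ) * δ ^ u = 2 ^ (s - u) * (m.divisors.card * (2 * δ) ^ u) := by
            rw [hk', mul_pow]; ring
        _ ≤ 2 ^ (s - u) * 1 := by gcongr
        _ = _ := mul_one _
    exact_mod_cast h1.trans h2
  have hall : ∀ e, ∃ f : ℕ → ℕ, Set.InjOn f ((Finset.Icc 1 k).filter (fun j => g j = e)) ∧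
      ∀ j ∈ (Finset.Icc 1 k).filter (fun j => g j = e),
        f j ∈ r.divisors.filter (fun f => j.Coprime f) := by
    intro e
    refine hall_on _ (fun j : ℕ => r.divisors.filter (fun f => j.Coprime f)) 0 ?_
    intro A hA
    rcases A.eq_empty_or_nonempty with rfl | hne
    · simp
    -- A member of `A` with the fewest primes of `r` already has enough neighbours.
    obtain ⟨j, hj, hmin⟩ := Finset.exists_min_image A U hne
    have h1 : 2 ^ (s - U j) ≤ (A.biUnion
        (fun j : ℕ => r.divisors.filter (fun f => j.Coprime f))).card :=
      (card_coprime_divisors_ge hr j).trans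
        (Finset.card_le_card (Finset.subset_biUnion_of_mem
          (fun j : ℕ => r.divisors.filter (fun f => j.Coprime f)) hj))
    refine le_trans ?_ h1
    rcases Nat.eq_zero_or_pos (U j) with h0 | h0
    · rw [h0, Nat.sub_zero, ← hrc]
      exact (Finset.card_le_card hA).trans (hfib e)
    · refine (Finset.card_le_card ?_).trans (hcount (U j) h0 (hUs j))
      intro i hi
      exact Finset.mem_filter.2 ⟨(Finset.mem_filter.1 (hA hi)).1, hmin i hi⟩
  choose f hinj hf using hall
  have hf' : ∀ j ∈ Finset.Icc 1 k, f (g j) j ∈ r.divisors ∧ j.Coprime (f (g j) j) :=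
    fun j hj => Finset.mem_filter.1 (hf (g j) j (Finset.mem_filter.2 ⟨hj, rfl⟩))
  have hkn : (m * r).divisors.card = k := hc.card_divisors_mul
  set h : ℕ → ℕ := fun j => g j * f (g j) j with hh
  have hmaps : ∀ j ∈ Finset.Icc 1 k, h j ∈ (m * r).divisors := by
    intro j hj
    exact Nat.mem_divisors.2 ⟨mul_dvd_mul (Nat.dvd_of_mem_divisors (hg j hj).1)
      (Nat.dvd_of_mem_divisors (hf' j hj).1), mul_ne_zero hm hr.ne_zero⟩
  have hhinj : Set.InjOn h (Finset.Icc 1 k) := by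
    intro x hx y hy hxy
    have hx' : x ∈ Finset.Icc 1 k := hx
    have hy' : y ∈ Finset.Icc 1 k := hy
    obtain ⟨q1, q2⟩ := coprime_mul_inj hc (Nat.dvd_of_mem_divisors (hg x hx').1)
      (Nat.dvd_of_mem_divisors (hg y hy').1) (Nat.dvd_of_mem_divisors (hf' x hx').1)
      (Nat.dvd_of_mem_divisors (hf' y hy').1) hxy
    rw [q1] at q2
    exact hinj (g y) (Finset.mem_coe.2 (Finset.mem_filter.2 ⟨hx', q1⟩))
      (Finset.mem_coe.2 (Finset.mem_filter.2 ⟨hy', rfl⟩)) q2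
  have hsurj : Set.SurjOn h (Finset.Icc 1 k) (m * r).divisors :=
    Finset.surjOn_of_injOn_of_card_le h hmaps hhinj (by rw [hkn]; simp)
  have hbij : Set.BijOn h (Finset.Icc 1 k) (m * r).divisors := ⟨hmaps, hhinj, hsurj⟩
  have hinv := hbij.invOn_invFunOn
  have hbij' := Set.BijOn.symm hinv.symm hbij
  refine ⟨Function.invFunOn h (Finset.Icc 1 k), by rw [hkn]; exact hbij', ?_⟩
  intro d hd
  have hmem : Function.invFunOn h (Finset.Icc 1 k) d ∈ Finset.Icc 1 k := hbij'.mapsTo hd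
  have heq : h (Function.invFunOn h (Finset.Icc 1 k) d) = d := hinv.2 hd
  have hcp : (Function.invFunOn h (Finset.Icc 1 k) d).Coprime
      (h (Function.invFunOn h (Finset.Icc 1 k) d)) :=
    Nat.Coprime.mul_right (hg _ hmem).2 (hf' _ hmem).2
  rw [heq] at hcp
  exact hcp.symm

/-! ### Density estimates -/

open Classical in
/-- The number of positive integers up to `x` that lie in `S`, as a real number. -/
noncomputable def cnt (S : Set ℕ) (x : ℕ) : ℝ :=
  (((Finset.Icc 1 x).filter (fun n => n ∈ S)).card : ℝ)

lemma cnt_le_card {S : Set ℕ} {x : ℕ} {A : Finset ℕ} (h : ∀ n ∈ Finset.Icc 1 x, n ∈ S → n ∈ A) :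
    cnt S x ≤ A.card := by
  classical
  unfold cnt
  norm_cast
  apply Finset.card_le_card
  intro n hn
  rw [Finset.mem_filter] at hn
  exact h n hn.1 hn.2

lemma cnt_mono {S T : Set ℕ} {x : ℕ} (h : ∀ n, 1 ≤ n → n ∈ S → n ∈ T) : cnt S x ≤ cnt T x := by
  classical
  apply cnt_le_card
  intro n hn hnS
  exact Finset.mem_filter.2 ⟨hn, h n (Finset.mem_Icc.1 hn).1 hnS⟩

lemma cnt_union (S T : Set ℕ) (x : ℕ) : cnt (S ∪ T) x ≤ cnt S x + cnt T x := by
  classical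
  unfold cnt
  norm_cast
  refine le_trans (Finset.card_le_card ?_) (Finset.card_union_le _ _)
  intro n hn
  simp only [Finset.mem_filter, Finset.mem_union, Set.mem_union] at hn ⊢
  tauto

/-- Markov's inequality for the counting function. -/
lemma cnt_markov (F : ℕ → ℝ) (hF : ∀ n, 0 ≤ F n) {η : ℝ} (hη : 0 < η) (x : ℕ) :
    cnt {n | η < F n} x ≤ (∑ n ∈ Finset.Icc 1 x, F n) / η := by
  classical
  rw [le_div_iff₀ hη]
  unfold cnt
  calc _ = ∑ n ∈ (Finset.Icc 1 x).filter (fun n => n ∈ {n | η < F n}), η := by simp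
    _ ≤ ∑ n ∈ (Finset.Icc 1 x).filter (fun n => n ∈ {n | η < F n}), F n := by
        apply Finset.sum_le_sum
        intro n hn
        exact (Finset.mem_filter.1 hn).2.le
    _ ≤ _ := Finset.sum_le_sum_of_subset_of_nonneg (Finset.filter_subset _ _)
        fun _ _ _ => hF _

lemma card_multiples_le (d x : ℕ) :
    (((Finset.Icc 1 x).filter (fun n => d ∣ n)).card : ℝ) ≤ (x : ℝ) / d := by
  have h : ((Finset.Icc 1 x).filter (fun n => d ∣ n)).card = x / d :=
    Nat.Ioc_filter_dvd_card_eq_div x d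
  rw [h]
  exact Nat.cast_div_le

lemma sum_inv_sq_le {K : ℕ} (hK : 1 ≤ K) (x : ℕ) :
    ∑ p ∈ Finset.Ioc K x, (1 : ℝ) / (p : ℝ) ^ 2 ≤ 1 / K := by
  rcases le_total K x with h | h
  · have := sum_Ioc_inv_sq_le_sub (α := ℝ) (by omega : K ≠ 0) h
    simp only [one_div]
    refine this.trans ?_
    have : (0 : ℝ) ≤ (x : ℝ)⁻¹ := by positivity
    linarith
  · rw [Finset.Ioc_eq_empty (by omega), Finset.sum_empty]
    positivity

lemma cnt_square_le {K : ℕ} (hK : 1 ≤ K) (x : ℕ) :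
    cnt {n | ∃ p : ℕ, p.Prime ∧ K < p ∧ p ^ 2 ∣ n} x ≤ x / K := by
  classical
  have hsub : (Finset.Icc 1 x).filter (fun n => n ∈ {n | ∃ p : ℕ, p.Prime ∧ K < p ∧ p ^ 2 ∣ n}) ⊆
      (Finset.Ioc K x).biUnion (fun p => (Finset.Icc 1 x).filter (fun n => p ^ 2 ∣ n)) := by
    intro n hn
    obtain ⟨hnx, p, hp, hKp, hpn⟩ := Finset.mem_filter.1 hn
    have hn' := Finset.mem_Icc.1 hnx
    refine Finset.mem_biUnion.2 ⟨p, Finset.mem_Ioc.2 ⟨hKp, ?_⟩, Finset.mem_filter.2 ⟨hnx, hpn⟩⟩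
    exact (Nat.le_of_dvd hn'.1 ((dvd_pow_self p two_ne_zero).trans hpn)).trans hn'.2
  calc cnt _ x ≤ ∑ p ∈ Finset.Ioc K x, (((Finset.Icc 1 x).filter (fun n => p ^ 2 ∣ n)).card : ℝ) := by
        unfold cnt
        exact_mod_cast (Finset.card_le_card hsub).trans Finset.card_biUnion_le
    _ ≤ ∑ p ∈ Finset.Ioc K x, (x : ℝ) * (1 / (p : ℝ) ^ 2) := by
        apply Finset.sum_le_sum
        intro p _
        have := card_multiples_le (p ^ 2) x
        push_cast at this
        rw [mul_one_div]
        exact this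
    _ ≤ x * (1 / K) := by
        rw [← Finset.mul_sum]
        gcongr
        exact sum_inv_sq_le hK x
    _ = x / K := mul_one_div _ _

/-- On average over `n ≤ x`, the sum of `1 / p` over the prime factors `p > K` of `n` is at most
`∑ 1 / p ^ 2 ≤ 1 / K`. -/
lemma sum_large_primes_le {K : ℕ} (hK : 1 ≤ K) (x : ℕ) :
    ∑ n ∈ Finset.Icc 1 x, ∑ p ∈ n.primeFactors.filter (K < ·), (1 : ℝ) / p ≤ x / K := by
  calc ∑ n ∈ Finset.Icc 1 x, ∑ p ∈ n.primeFactors.filter (K < ·), (1 : ℝ) / p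
      ≤ ∑ n ∈ Finset.Icc 1 x, ∑ p ∈ (Finset.Ioc K x).filter (· ∣ n), (1 : ℝ) / p := by
        apply Finset.sum_le_sum
        intro n hn
        have hn' := Finset.mem_Icc.1 hn
        apply Finset.sum_le_sum_of_subset_of_nonneg
        · intro p hp
          obtain ⟨hp1, hp2⟩ := Finset.mem_filter.1 hp
          have hd := Nat.dvd_of_mem_primeFactors hp1
          exact Finset.mem_filter.2 ⟨Finset.mem_Ioc.2
            ⟨hp2, (Nat.le_of_dvd hn'.1 hd).trans hn'.2⟩, hd⟩
        · intros; positivity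
    _ = ∑ p ∈ Finset.Ioc K x, ∑ n ∈ (Finset.Icc 1 x).filter (fun n => p ∣ n), (1 : ℝ) / p := by
        simp only [Finset.sum_filter]
        exact Finset.sum_comm
    _ ≤ ∑ p ∈ Finset.Ioc K x, (x : ℝ) * (1 / (p : ℝ) ^ 2) := by
        apply Finset.sum_le_sum
        intro p _
        rw [Finset.sum_const, nsmul_eq_mul]
        calc _ ≤ (x : ℝ) / p * (1 / p) := by
              gcongr
              exact card_multiples_le p x
          _ = _ := by rw [div_mul_div_comm, mul_one_div]; ring
    _ ≤ x * (1 / K) := by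
        rw [← Finset.mul_sum]
        gcongr
        exact sum_inv_sq_le hK x
    _ = x / K := mul_one_div _ _

/-- The Euler product over the primes up to an odd `q` is at most `2 √q`. This elementary bound
telescopes over odd numbers, since `(q / (q - 1)) ^ 2 ≤ q / (q - 2)`. -/
lemma prod_primesBelow_sq_le (i : ℕ) :
    (∏ p ∈ Nat.primesBelow (2 * i + 2), (1 - (p : ℝ)⁻¹)⁻¹) ^ 2 ≤ 4 * (2 * i + 1) := by
  induction i with
  | zero =>
    have : Nat.primesBelow 2 = ∅ := by decide
    simp [this]
  | succ i ih =>
    rcases Nat.eq_zero_or_pos i with rfl | hi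
    · have : Nat.primesBelow 4 = {2, 3} := by decide
      norm_num [this]
    · have hnp : ¬ (2 * i + 2).Prime := by
        intro h
        have := (Nat.prime_dvd_prime_iff_eq Nat.prime_two h).1 ⟨i + 1, by ring⟩
        omega
      have hs : Nat.primesBelow (2 * (i + 1) + 2) = if (2 * i + 3).Prime then
          insert (2 * i + 3) (Nat.primesBelow (2 * i + 2)) else Nat.primesBelow (2 * i + 2) := by
        rw [show 2 * (i + 1) + 2 = (2 * i + 3) + 1 by ring, Nat.primesBelow_succ,
          show 2 * i + 3 = (2 * i + 2) + 1 by ring, Nat.primesBelow_succ (2 * i + 2), if_neg hnp]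
      rw [hs]
      split_ifs with hp
      · rw [Finset.prod_insert (by simp [Nat.mem_primesBelow]), mul_pow]
        have hi' : (0 : ℝ) < i := by exact_mod_cast hi
        have h1 : ((1 - ((2 * i + 3 : ℕ) : ℝ)⁻¹)⁻¹) ^ 2 ≤ (2 * i + 3) / (2 * i + 1) := by
          have : (1 - ((2 * i + 3 : ℕ) : ℝ)⁻¹)⁻¹ = (2 * i + 3) / (2 * i + 2) := by
            push_cast
            have : (2 * (i : ℝ) + 3) - 1 ≠ 0 := by linarith
            field_simp
            ring
          rw [this, div_pow, div_le_div_iff₀ (by positivity) (by positivity)]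
          nlinarith
        calc _ ≤ (2 * (i : ℝ) + 3) / (2 * i + 1) * (4 * (2 * i + 1)) := by gcongr
          _ = _ := by push_cast; field_simp; ring
      · push_cast
        linarith

open Classical in
/-- The mean number of divisors with all prime factors below `N` is at most the sum of the
reciprocals of all such integers, which is an Euler product. -/
lemma sum_smooth_divisors_le (N x : ℕ) :
    ∑ n ∈ Finset.Icc 1 x, ((n.divisors.filter (· ∈ Nat.smoothNumbers N)).card : ℝ)
      ≤ x * ∏ p ∈ Nat.primesBelow N, (1 - (p : ℝ)⁻¹)⁻¹ := by
  have hmul : ∀ a b : ℕ, ((a * b : ℕ) : ℝ)⁻¹ = (a : ℝ)⁻¹ * (b : ℝ)⁻¹ := by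
    intro a b
    push_cast
    rw [mul_inv]
  have hsum := (EulerProduct.summable_and_hasSum_smoothNumbers_prod_primesBelow_geometric
    (F := ℝ) (f := { toFun := fun n => (n : ℝ)⁻¹, map_one' := by simp, map_mul' := hmul }) (by
        intro p hp
        simp only [MonoidHom.coe_mk, OneHom.coe_mk, norm_inv, Real.norm_natCast]
        exact inv_lt_one_of_one_lt₀ (by exact_mod_cast hp.one_lt)) N).2
  simp only [MonoidHom.coe_mk, OneHom.coe_mk] at hsum
  have hle : ∑ d ∈ (Finset.Icc 1 x).filter (· ∈ Nat.smoothNumbers N), ((d : ℝ)⁻¹)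
      ≤ ∏ p ∈ Nat.primesBelow N, (1 - (p : ℝ)⁻¹)⁻¹ := by
    rw [← Finset.sum_subtype_eq_sum_filter]
    exact sum_le_hasSum _ (fun _ _ => by positivity) hsum
  calc ∑ n ∈ Finset.Icc 1 x, ((n.divisors.filter (· ∈ Nat.smoothNumbers N)).card : ℝ)
      ≤ ∑ n ∈ Finset.Icc 1 x, ∑ d ∈ (Finset.Icc 1 x).filter (· ∈ Nat.smoothNumbers N),
          if d ∣ n then (1 : ℝ) else 0 := by
        apply Finset.sum_le_sum
        intro n hn
        have hn' := Finset.mem_Icc.1 hn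
        rw [← Finset.sum_filter, Finset.sum_const, nsmul_eq_mul, mul_one]
        norm_cast
        apply Finset.card_le_card
        intro d hd
        obtain ⟨hd1, hd2⟩ := Finset.mem_filter.1 hd
        have hdn := Nat.dvd_of_mem_divisors hd1
        have hd0 := Nat.pos_of_mem_divisors hd1
        simp only [Finset.mem_filter, Finset.mem_Icc]
        exact ⟨⟨⟨hd0, (Nat.le_of_dvd hn'.1 hdn).trans hn'.2⟩, hd2⟩, hdn⟩
    _ = ∑ d ∈ (Finset.Icc 1 x).filter (· ∈ Nat.smoothNumbers N),
          (((Finset.Icc 1 x).filter (fun n => d ∣ n)).card : ℝ) := by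
        rw [Finset.sum_comm]
        simp
    _ ≤ ∑ d ∈ (Finset.Icc 1 x).filter (· ∈ Nat.smoothNumbers N), (x : ℝ) * (d : ℝ)⁻¹ :=
        Finset.sum_le_sum fun d _ => card_multiples_le d x
    _ ≤ _ := by
        rw [← Finset.mul_sum]
        gcongr

/-- A consequence of the divergence of the sum of the reciprocals of the primes. -/
lemma exists_primes_large_sum (K : ℕ) (C : ℝ) :
    ∃ Q : Finset ℕ, (∀ p ∈ Q, p.Prime ∧ K < p) ∧ C ≤ ∑ p ∈ Q, (1 : ℝ) / p := by
  have h := not_summable_one_div_on_primes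
  rw [not_summable_iff_tendsto_nat_atTop_of_nonneg] at h
  · obtain ⟨N, hN⟩ := (h.eventually_ge_atTop (C + ∑ i ∈ Finset.range (K + 1),
      Set.indicator {p : ℕ | p.Prime} (fun n : ℕ => (1 : ℝ) / n) i)).exists
    refine ⟨(Finset.range N).filter (fun p => p.Prime ∧ K < p), by simp, ?_⟩
    have hsplit : ∑ i ∈ Finset.range N,
        Set.indicator {p : ℕ | p.Prime} (fun n : ℕ => (1 : ℝ) / n) i
        ≤ ∑ p ∈ (Finset.range N).filter (fun p => p.Prime ∧ K < p), (1 : ℝ) / p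
          + ∑ i ∈ Finset.range (K + 1),
            Set.indicator {p : ℕ | p.Prime} (fun n : ℕ => (1 : ℝ) / n) i := by
      rw [← Finset.sum_filter_add_sum_filter_not (Finset.range N) (fun i => K < i)]
      apply add_le_add
      · apply le_of_eq
        simp only [Finset.sum_filter, Set.indicator]
        apply Finset.sum_congr rfl
        intro i _
        by_cases h1 : K < i <;> by_cases h2 : i.Prime <;> simp [h1, h2]
      · apply Finset.sum_le_sum_of_subset_of_nonneg
        · intro i hi
          simp only [Finset.mem_filter, Finset.mem_range] at hi ⊢
          omega
        · intro i _ _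
          exact Set.indicator_nonneg (fun _ _ => by positivity) _
    linarith
  · intro n
    exact Set.indicator_nonneg (fun _ _ => by positivity) _

/-- The integers free of primes from `Q` have density `∏ (1 - 1 / p) ≤ exp (-∑ 1 / p)`; the factor `2`
absorbs the incomplete last period. -/
lemma cnt_coprime_le (Q : Finset ℕ) (hQ : ∀ p ∈ Q, p.Prime) {ε : ℝ} (hε : 0 < ε)
    (h : Real.exp (-∑ p ∈ Q, (1 : ℝ) / p) ≤ ε) :
    ∀ᶠ x : ℕ in Filter.atTop, cnt {n | ∀ p ∈ Q, ¬ p ∣ n} x ≤ 2 * ε * x := by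
  classical
  set M := ∏ p ∈ Q, p with hM
  have hM0 : M ≠ 0 := Finset.prod_ne_zero_iff.2 fun p hp => (hQ p hp).ne_zero
  have hMpos : (0 : ℝ) < M := by exact_mod_cast Nat.pos_of_ne_zero hM0
  have hpf : M.primeFactors = Q := Nat.primeFactors_prod hQ
  have htot : (M.totient : ℝ) ≤ M * ε := by
    have h1 : (M.totient : ℝ) = M * ∏ p ∈ Q, (1 - (p : ℝ)⁻¹) := by
      have := Nat.totient_eq_mul_prod_factors M
      rw [hpf] at this
      have h2 := congrArg (fun q : ℚ => (q : ℝ)) this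
      push_cast at h2
      exact h2
    rw [h1]
    gcongr
    refine le_trans ?_ h
    rw [← Finset.sum_neg_distrib, Real.exp_sum]
    apply Finset.prod_le_prod
    · intro p hp
      have : (p : ℝ)⁻¹ ≤ 1 := inv_le_one_of_one_le₀ (by exact_mod_cast (hQ p hp).one_lt.le)
      linarith
    · intro p _
      have := Real.add_one_le_exp (-(1 / (p : ℝ)))
      rw [one_div] at this ⊢
      linarith
  filter_upwards [Filter.eventually_ge_atTop M] with x hx
  have hsub : ∀ n ∈ Finset.Icc 1 x, n ∈ {n | ∀ p ∈ Q, ¬ p ∣ n} →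
      n ∈ (Finset.Ico 1 (1 + x)).filter (fun n => M.Coprime n) := by
    intro n h1 h2
    rw [Finset.mem_Icc] at h1
    refine Finset.mem_filter.2 ⟨Finset.mem_Ico.2 ⟨h1.1, by omega⟩, ?_⟩
    exact Nat.Coprime.prod_left fun p hp => ((hQ p hp).coprime_iff_not_dvd).2 (h2 p hp)
  have hxR : (M : ℝ) ≤ x := by exact_mod_cast hx
  calc cnt _ x ≤ ((M.totient * (x / M + 1) : ℕ) : ℝ) :=
        (cnt_le_card hsub).trans (Nat.cast_le.2 (Nat.Ico_filter_coprime_le 1 x hM0))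
    _ ≤ (M * ε) * ((x : ℝ) / M + 1) := by
        push_cast
        gcongr
        exact Nat.cast_div_le
    _ = ε * x + ε * M := by field_simp
    _ ≤ 2 * ε * x := by nlinarith

/-- The integers with fewer than `s` prime factors above `K` have density `0`. In the induction step,
all but a small proportion of integers have a prime factor in some fixed finite set `Q` of primes
above `K`, and the prime factors beyond `Q` are handled by the induction hypothesis. -/
lemma cnt_few_primes (s : ℕ) : ∀ (K : ℕ) {ε : ℝ}, 0 < ε → ∀ᶠ x : ℕ in Filter.atTop,
    cnt {n | (n.primeFactors.filter (K < ·)).card < s} x ≤ ε * x := by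
  induction s with
  | zero =>
    intro K ε hε
    filter_upwards with x
    have : cnt {n | (n.primeFactors.filter (K < ·)).card < 0} x = 0 := by
      simp [cnt]
    rw [this]
    positivity
  | succ s ih =>
    intro K ε hε
    obtain ⟨Q, hQ, hC⟩ := exists_primes_large_sum K (-Real.log (ε / 4))
    have hexp : Real.exp (-∑ p ∈ Q, (1 : ℝ) / p) ≤ ε / 4 := by
      rw [← Real.exp_log (by positivity : 0 < ε / 4), Real.exp_le_exp]
      linarith
    obtain ⟨K', hK'⟩ : ∃ K', ∀ p ∈ Q, p ≤ K' := ⟨Q.sup id, fun p hp => Finset.le_sup (f := id) hp⟩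
    filter_upwards [cnt_coprime_le Q (fun p hp => (hQ p hp).1) (by positivity) hexp,
      ih (max K K') (half_pos hε)] with x h1 h2
    have hsub : cnt {n | (n.primeFactors.filter (K < ·)).card < s + 1} x ≤
        cnt ({n | ∀ p ∈ Q, ¬ p ∣ n} ∪ {n | (n.primeFactors.filter (max K K' < ·)).card < s}) x := by
      apply cnt_mono
      intro n hn1 hn
      by_cases hq : ∀ p ∈ Q, ¬ p ∣ n
      · exact Or.inl hq
      · right
        push Not at hq
        obtain ⟨p, hp, hpn⟩ := hq
        have hlt : n.primeFactors.filter (max K K' < ·) ⊂ n.primeFactors.filter (K < ·) := by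
          rw [Finset.ssubset_iff_of_subset]
          · refine ⟨p, ?_, ?_⟩
            · simp only [Finset.mem_filter, Nat.mem_primeFactors]
              exact ⟨⟨(hQ p hp).1, hpn, by omega⟩, (hQ p hp).2⟩
            · have := hK' p hp
              simp only [Finset.mem_filter, not_and, max_lt_iff]
              omega
          · intro q hq
            simp only [Finset.mem_filter, max_lt_iff] at hq ⊢
            tauto
        have := Finset.card_lt_card hlt
        simp only [Set.mem_ofPred_eq] at hn ⊢
        omega
    have h3 := cnt_union {n | ∀ p ∈ Q, ¬ p ∣ n}
      {n | (n.primeFactors.filter (max K K' < ·)).card < s} x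
    linarith

/-! ### Typical M-numbers are matchable -/

lemma exists_smooth_rough (N n : ℕ) (hn : n ≠ 0) :
    ∃ m r : ℕ, n = m * r ∧ (∀ p : ℕ, p.Prime → p ∣ m → p < N) ∧
      ∀ p : ℕ, p.Prime → p ∣ r → N ≤ p := by
  induction n using induction_on_primes with
  | zero => exact absurd rfl hn
  | one =>
    exact ⟨1, 1, rfl, fun p hp h => absurd (Nat.dvd_one.1 h) hp.ne_one,
      fun p hp h => absurd (Nat.dvd_one.1 h) hp.ne_one⟩
  | prime_mul q a hq ih =>
    obtain ⟨m, r, rfl, hm, hr⟩ := ih (right_ne_zero_of_mul hn)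
    rcases lt_or_ge q N with h | h
    · refine ⟨q * m, r, by ring, ?_, hr⟩
      intro p hp hpd
      rcases hp.dvd_mul.1 hpd with h' | h'
      · rwa [(Nat.prime_dvd_prime_iff_eq hp hq).1 h']
      · exact hm p hp h'
    · refine ⟨m, q * r, by ring, hm, ?_⟩
      intro p hp hpd
      rcases hp.dvd_mul.1 hpd with h' | h'
      · rwa [(Nat.prime_dvd_prime_iff_eq hp hq).1 h']
      · exact hr p hp h'

/-- Only finitely many M-numbers have all their prime factors below `N`. -/
lemma dvd_of_smooth_mNumber {N m : ℕ} (hm : m ≠ 0) (hs : ∀ p : ℕ, p.Prime → p ∣ m → p < N)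
    (hM : IsMNumber m) : m ∣ ∏ p ∈ Nat.primesBelow N, p ^ p := by
  rw [← Nat.prod_factorization_pow_eq_self hm, Finsupp.prod, Nat.support_factorization]
  refine (Finset.prod_dvd_prod_of_dvd _ (fun p => p ^ p) ?_).trans
    (Finset.prod_dvd_prod_of_subset _ _ _ ?_)
  · intro p hp
    apply pow_dvd_pow
    by_contra h
    exact hM p (Nat.prime_of_mem_primeFactors hp)
      ((pow_dvd_pow p (by omega)).trans (Nat.ordProj_dvd m p))
  · intro p hp
    have hp' := Nat.prime_of_mem_primeFactors hp
    exact Nat.mem_primesBelow.2 ⟨hs p hp' (Nat.dvd_of_mem_primeFactors hp), hp'⟩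

open Classical in
/-- For a suitable `s` depending only on `K`, an M-number `n` is matchable if it is not divisible by
the square of a prime above `K`, has at most `T` divisors composed of primes up to `K`, satisfies
`∑ 1 / p ≤ 1 / (2 T)` over its prime factors above `K`, and has at least `s` of these. A uniform `s`
exists since only finitely many M-numbers can occur as the part of `n` with prime factors at
most `K`. -/
lemma exists_threshold (K : ℕ) : ∃ s : ℕ, ∀ (n : ℕ) (T : ℝ), n ≠ 0 → 0 < T → IsMNumber n →
    (¬ ∃ p : ℕ, p.Prime ∧ K < p ∧ p ^ 2 ∣ n) →
    ((n.divisors.filter (· ∈ Nat.smoothNumbers (K + 1))).card : ℝ) ≤ T →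
    ∑ p ∈ n.primeFactors.filter (K < ·), (1 : ℝ) / p ≤ 1 / (2 * T) →
    s ≤ (n.primeFactors.filter (K < ·)).card → Matchable n := by
  have hev : ∀ᶠ L : ℕ in Filter.atTop,
      ∀ m ∈ (∏ p ∈ Nat.primesBelow (K + 1), p ^ p).divisors, IsMNumber m → ∃ g : ℕ → ℕ,
      (∀ j ∈ Finset.Icc 1 (m.divisors.card * L), g j ∈ m.divisors ∧ j.Coprime (g j)) ∧
      ∀ e, ((Finset.Icc 1 (m.divisors.card * L)).filter (fun j => g j = e)).card ≤ L := by
    rw [Filter.eventually_all_finset]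
    intro m hm
    by_cases hM : IsMNumber m
    · filter_upwards [small_assign m (Nat.pos_of_mem_divisors hm).ne' hM] with L hL _
      exact hL
    · exact Filter.Eventually.of_forall fun L h => absurd h hM
  obtain ⟨s, hs⟩ := Filter.eventually_atTop.1 hev
  refine ⟨s, ?_⟩
  intro n T hn hT hM hsq hA hB hω
  obtain ⟨m, r, rfl, hm, hr⟩ := exists_smooth_rough (K + 1) n hn
  have hm0 := left_ne_zero_of_mul hn
  have hr0 := right_ne_zero_of_mul hn
  have hc : m.Coprime r := by
    apply Nat.coprime_of_dvd
    intro p hp h1 h2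
    have := hm p hp h1
    have := hr p hp h2
    omega
  have hMm : IsMNumber m := fun p hp h => hM p hp (h.mul_right r)
  have hrsq : Squarefree r := by
    rw [Nat.squarefree_iff_prime_squarefree]
    intro p hp h
    refine hsq ⟨p, hp, hr p hp ((dvd_mul_right p p).trans h), ?_⟩
    rw [pow_two]
    exact h.mul_left m
  have hpf : (m * r).primeFactors.filter (K < ·) = r.primeFactors := by
    ext p
    simp only [Finset.mem_filter, Nat.mem_primeFactors]
    constructor
    · rintro ⟨⟨hp, hd, _⟩, hK⟩
      rcases hp.dvd_mul.1 hd with h | h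
      · have := hm p hp h
        omega
      · exact ⟨hp, h, hr0⟩
    · rintro ⟨hp, hd, _⟩
      exact ⟨⟨hp, hd.mul_left m, hn⟩, hr p hp hd⟩
  rw [hpf] at hB hω
  have hτ : (m.divisors.card : ℝ) ≤ T := by
    refine le_trans ?_ hA
    norm_cast
    apply Finset.card_le_card
    intro d hd
    have hdm := Nat.dvd_of_mem_divisors hd
    refine Finset.mem_filter.2 ⟨Nat.mem_divisors.2 ⟨hdm.mul_right r, hn⟩, ?_⟩
    rw [Nat.mem_smoothNumbers']
    exact fun p hp h => hm p hp (h.trans hdm)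
  have hL : s ≤ r.divisors.card := by
    rw [card_divisors_squarefree hrsq]
    exact hω.trans Nat.lt_two_pow_self.le
  obtain ⟨g, hg, hfib⟩ := hs _ hL m (Nat.mem_divisors.2 ⟨dvd_of_smooth_mNumber hm0 hm hMm,
    Finset.prod_ne_zero_iff.2 fun p hp =>
      pow_ne_zero _ (Nat.mem_primesBelow.1 hp).2.ne_zero⟩) hMm
  refine matchable_of_assign hm0 hrsq hc ?_ hg hfib
  calc 2 * (m.divisors.card : ℝ) * ∑ p ∈ r.primeFactors, (1 : ℝ) / p
      ≤ 2 * T * (1 / (2 * T)) := by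
        gcongr
    _ = 1 := by field_simp

/-- The exceptional M-numbers have upper density at most `6 / y`, where `y = 2 z + 1`. The parameters of
`exists_threshold` are `K = y ^ 4` and `T = y ^ 3`: the mean number of divisors with prime factors
at most `K` is at most `2 y ^ 2`, and the mean of `∑ 1 / p` over prime factors above `K` is at most
`1 / y ^ 4`. The number `y` is odd so that `prod_primesBelow_sq_le` applies to `K`. -/
lemma cnt_bad_le (z : ℕ) : ∀ᶠ x : ℕ in Filter.atTop,
    cnt {n | IsMNumber n ∧ ¬ Matchable n} x ≤ 6 / (2 * z + 1) * x := by
  classical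
  set y : ℝ := 2 * z + 1 with hy
  have hy1 : 1 ≤ y := by
    have : (0 : ℝ) ≤ z := by positivity
    linarith
  have hy0 : 0 < y := by linarith
  set K : ℕ := (2 * z + 1) ^ 4 with hK
  have hKy : (K : ℝ) = y ^ 4 := by rw [hK, hy]; push_cast; ring
  have hK1 : 1 ≤ K := Nat.one_le_pow _ _ (by omega)
  have hprod : ∏ p ∈ Nat.primesBelow (K + 1), (1 - (p : ℝ)⁻¹)⁻¹ ≤ 2 * y ^ 2 := by
    have hodd : Odd K := Odd.pow ⟨z, rfl⟩
    obtain ⟨i, hi⟩ := hodd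
    have h := prod_primesBelow_sq_le i
    rw [show 2 * i + 2 = K + 1 by omega] at h
    have hKi : (K : ℝ) = 2 * i + 1 := by rw [hi]; push_cast; ring
    rw [← hKi, hKy] at h
    apply le_of_sq_le_sq _ (by positivity)
    nlinarith
  obtain ⟨s, hs⟩ := exists_threshold K
  filter_upwards [cnt_few_primes s K (by positivity : 0 < 1 / y)] with x hx
  set S₁ : Set ℕ := {n | ∃ p : ℕ, p.Prime ∧ K < p ∧ p ^ 2 ∣ n}
  set S₂ : Set ℕ := {n | y ^ 3 < ((n.divisors.filter (· ∈ Nat.smoothNumbers (K + 1))).card : ℝ)}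
  set S₃ : Set ℕ := {n | 1 / (2 * y ^ 3) < ∑ p ∈ n.primeFactors.filter (K < ·), (1 : ℝ) / p}
  set S₄ : Set ℕ := {n | (n.primeFactors.filter (K < ·)).card < s}
  have hx0 : (0 : ℝ) ≤ x := by positivity
  have h1 : cnt S₁ x ≤ x / y := by
    refine (cnt_square_le hK1 x).trans ?_
    rw [hKy]
    gcongr
    exact le_self_pow₀ hy1 (by norm_num)
  have h2 : cnt S₂ x ≤ 2 * x / y := by
    refine (cnt_markov _ (fun n => by positivity) (by positivity) x).trans ?_
    rw [div_le_iff₀ (by positivity)]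
    refine (sum_smooth_divisors_le (K + 1) x).trans ?_
    calc (x : ℝ) * _ ≤ x * (2 * y ^ 2) := by gcongr
      _ = 2 * x / y * y ^ 3 := by field_simp
  have h3 : cnt S₃ x ≤ 2 * x / y := by
    refine (cnt_markov _ (fun n => Finset.sum_nonneg fun _ _ => by positivity)
      (by positivity) x).trans ?_
    rw [div_le_iff₀ (by positivity)]
    refine (sum_large_primes_le hK1 x).trans ?_
    rw [hKy]
    apply le_of_eq
    field_simp
  have hsub : cnt {n | IsMNumber n ∧ ¬ Matchable n} x ≤ cnt (S₁ ∪ (S₂ ∪ (S₃ ∪ S₄))) x := by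
    apply cnt_mono
    rintro n hn ⟨hM, hnot⟩
    by_contra hout
    simp only [Set.mem_union, not_or] at hout
    obtain ⟨o1, o2, o3, o4⟩ := hout
    exact hnot (hs n (y ^ 3) (by omega) (by positivity) hM o1 (not_lt.1 o2) (not_lt.1 o3)
      (not_lt.1 o4))
  have u1 := cnt_union S₁ (S₂ ∪ (S₃ ∪ S₄)) x
  have u2 := cnt_union S₂ (S₃ ∪ S₄) x
  have u3 := cnt_union S₃ S₄ x
  calc _ ≤ x / y + (2 * x / y + (2 * x / y + 1 / y * x)) := by linarith
    _ = _ := by ring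

open Classical in
theorem stmt_12 :
    Filter.Tendsto
      (fun x : ℕ =>
        (((Finset.Icc 1 x).filter (fun n => IsMNumber n ∧ ¬ Matchable n)).card : ℝ) / (x : ℝ))
      Filter.atTop (nhds 0) := by
  rw [Metric.tendsto_nhds]
  intro ε hε
  obtain ⟨z, hz⟩ := exists_nat_gt (6 / ε)
  have hz' : 6 / (2 * (z : ℝ) + 1) < ε := by
    have hz0 : (0 : ℝ) ≤ z := by positivity
    rw [div_lt_iff₀ hε] at hz
    rw [div_lt_iff₀ (by positivity)]
    nlinarith
  filter_upwards [cnt_bad_le z, Filter.eventually_gt_atTop 0] with x hx hx0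
  have hxR : (0 : ℝ) < x := by exact_mod_cast hx0
  rw [Real.dist_0_eq_abs, abs_of_nonneg (by positivity), div_lt_iff₀ hxR]
  calc _ ≤ 6 / (2 * (z : ℝ) + 1) * x := by
        unfold cnt at hx
        convert hx using 2
        congr 1
        ext n
        simp
    _ < ε * x := by gcongr
end
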